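/- arXiv:1609.07795 — 9 statements merged into one kernel-verified Lean document; each statement's English description precedes it below -/
import Mathlib

section
/- Let X ∈ Mₙ(ℂ) be anti-symmetric (Xᵀ = −X) of rank 2. Then X·X*·X = (½ tr(X*X))·X and det(1ₙ − X*X) = (1 − ½ tr(X*X))². -/
open Matrix

/-- A matrix of rank `r` is fixed by left multiplication by some product `A * L` of an `m × r`
and an `r × m` matrix. -/
theorem Matrix.exists_mul_mul_eq_self_of_rank_eq {K m n : Type*} [Field K] [Fintype m]
    [DecidableEq m] [Fintype n] [DecidableEq n] {r : ℕ} (X : Matrix m n K) (hrank : X.rank = r) :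
    ∃ (A : Matrix m (Fin r) K) (L : Matrix (Fin r) m K), A * L * X = X := by
  let e : X.mulVecLin.range ≃ₗ[K] (Fin r → K) :=
    LinearEquiv.ofFinrankEq _ _ (by rw [Module.finrank_fin_fun]; exact hrank)
  obtain ⟨p, hp⟩ := X.mulVecLin.range.subtype.exists_leftInverse_of_injective
    (Submodule.ker_subtype _)
  refine ⟨LinearMap.toMatrix' (X.mulVecLin.range.subtype ∘ₗ e.symm.toLinearMap),
    LinearMap.toMatrix' (e.toLinearMap ∘ₗ p), ?_⟩
  apply Matrix.toLin'.injective
  rw [Matrix.toLin'_mul, Matrix.toLin'_mul, Matrix.toLin'_toMatrix', Matrix.toLin'_toMatrix']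
  refine LinearMap.ext fun v => ?_
  have hv := LinearMap.congr_fun hp ⟨X.mulVecLin v, LinearMap.mem_range_self _ v⟩
  simp only [LinearMap.comp_apply, Submodule.subtype_apply, LinearMap.id_apply,
    mulVecLin_apply] at hv
  simp [hv]

/-- An antisymmetric matrix of rank `r` is congruent to an antisymmetric `r × r` matrix. -/
theorem Matrix.exists_eq_mul_mul_transpose_of_transpose_eq_neg {K n : Type*} [Field K]
    [Fintype n] [DecidableEq n] {r : ℕ} (X : Matrix n n K) (hanti : Xᵀ = -X)
    (hrank : X.rank = r) :
    ∃ (A : Matrix n (Fin r) K) (C : Matrix (Fin r) (Fin r) K), Cᵀ = -C ∧ X = A * C * Aᵀ := by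
  obtain ⟨A, L, h⟩ := X.exists_mul_mul_eq_self_of_rank_eq hrank
  have h' : X * (Lᵀ * Aᵀ) = X := by
    have ht := congrArg Matrix.transpose h
    rwa [transpose_mul, transpose_mul, hanti, Matrix.neg_mul, neg_inj] at ht
  refine ⟨A, L * X * Lᵀ, ?_, ?_⟩
  · simp [transpose_mul, hanti, Matrix.mul_assoc]
  · calc X = A * L * X * (Lᵀ * Aᵀ) := by rw [h, h']
      _ = A * (L * X * Lᵀ) * Aᵀ := by simp only [Matrix.mul_assoc]

/-- For antisymmetric `2 × 2` matrices `C` and `D` and any `G`, the product `Gᵀ * D * G * C` is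
scalar. -/
theorem Matrix.exists_transpose_mul_mul_mul_eq_smul_one {K : Type*} [Field K] [CharZero K]
    (G C D : Matrix (Fin 2) (Fin 2) K) (hC : Cᵀ = -C) (hD : Dᵀ = -D) :
    ∃ s : K, Gᵀ * D * G * C = s • (1 : Matrix (Fin 2) (Fin 2) K) := by
  have entries {M : Matrix (Fin 2) (Fin 2) K} (hM : Mᵀ = -M) :
      M 0 0 = 0 ∧ M 1 1 = 0 ∧ M 1 0 = -M 0 1 :=
    ⟨self_eq_neg.mp (congrFun₂ hM 0 0), self_eq_neg.mp (congrFun₂ hM 1 1), congrFun₂ hM 0 1⟩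
  obtain ⟨c₀, c₁, c₂⟩ := entries hC
  obtain ⟨d₀, d₁, d₂⟩ := entries hD
  refine ⟨-(D 0 1 * C 0 1 * G.det), ?_⟩
  ext i j
  fin_cases i <;> fin_cases j <;>
    simp [Matrix.mul_apply, Fin.sum_univ_two, det_fin_two, c₀, c₁, c₂, d₀, d₁, d₂,
      -mul_eq_zero, -neg_eq_zero] <;> ring

/-- For an anti-symmetric complex matrix `X` of rank 2 one has
`X X⋆ X = (tr(X⋆X)/2) • X` and `det(1 - X⋆X) = (1 - tr(X⋆X)/2)²`. -/
theorem antisymmetric_rank_two_identities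
    {n : ℕ} (X : Matrix (Fin n) (Fin n) ℂ)
    (hanti : Xᵀ = -X) (hrank : X.rank = 2) :
    X * Xᴴ * X = ((Xᴴ * X).trace / 2) • X ∧
    (1 - Xᴴ * X).det = (1 - (Xᴴ * X).trace / 2) ^ 2 := by
  obtain ⟨A, C, hC, rfl⟩ := X.exists_eq_mul_mul_transpose_of_transpose_eq_neg hanti hrank
  have hCH : Cᴴᵀ = -Cᴴ := by
    rw [← conjTranspose_neg, ← hC]; rfl
  obtain ⟨s, hs⟩ := exists_transpose_mul_mul_mul_eq_smul_one (Aᴴ * A) C Cᴴ hC hCH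
  have hG : (Aᴴ * A)ᵀ = Aᵀ * Aᵀᴴ := by
    rw [transpose_mul]; rfl
  rw [hG] at hs
  have hX : (A * C * Aᵀ)ᴴ * (A * C * Aᵀ) = (Aᵀᴴ * Cᴴ * (Aᴴ * A) * C) * Aᵀ := by
    simp only [conjTranspose_mul, Matrix.mul_assoc]
  have hs' : Aᵀ * (Aᵀᴴ * Cᴴ * (Aᴴ * A) * C) = s • (1 : Matrix (Fin 2) (Fin 2) ℂ) := by
    rw [← hs]; simp only [Matrix.mul_assoc]
  have htr : ((A * C * Aᵀ)ᴴ * (A * C * Aᵀ)).trace / 2 = s := by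
    rw [hX, trace_mul_comm, hs']
    simp [trace_smul]
  rw [htr, Matrix.mul_assoc, hX, det_one_sub_mul_comm, hs']
  constructor
  · rw [Matrix.mul_assoc (A * C), ← Matrix.mul_assoc Aᵀ, hs']
    simp
  · simp [det_fin_two, sq]
end

section
/- Fix γ with 2γ ∈ ℕ and let M_γ = {−γ, −γ+1, …, γ}. For j ∈ ℂ set q_μ := −(j+μ)(j+μ+1) for μ ∈ M_γ. Then the numbers q_μ, μ ∈ M_γ, are pairwise distinct if and only if either j is not a half-integer (there is no k ∈ ℤ with j = k/2), or j is a half-integer satisfying j > γ − 1 or j < −γ. -/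
/-- Two values of `x ↦ -(x (x + 1))` at `j + μ` and `j + ν` with `μ ≠ ν` agree exactly when
`j + μ` and `j + ν` are symmetric about `-1/2`. -/
theorem neg_mul_add_one_eq_iff {j μ ν : ℂ} (h : μ ≠ ν) :
    -((j + μ) * (j + μ + 1)) = -((j + ν) * (j + ν + 1)) ↔ 2 * j = -(μ + ν + 1) := by
  rw [← sub_eq_zero, ← sub_eq_zero (a := 2 * j)]
  have key : -((j + μ) * (j + μ + 1)) - -((j + ν) * (j + ν + 1)) =
      (ν - μ) * (2 * j - -(μ + ν + 1)) := by ring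
  rw [key, mul_eq_zero, or_iff_right (sub_ne_zero.mpr h.symm)]

/-- An integer strictly between `0` and `2 n` is a sum of two distinct naturals at most `n`. -/
theorem exists_lt_le_add_eq {n : ℕ} {s : ℤ} (h0 : 0 < s) (h1 : s < 2 * n) :
    ∃ a b : ℕ, a < b ∧ b ≤ n ∧ (a + b : ℤ) = s := by
  rcases le_total s n with h | h
  · exact ⟨0, s.toNat, by omega, by omega, by omega⟩
  · exact ⟨(s - n).toNat, n, by omega, le_rfl, by omega⟩

/-- Fix a positive half-integer `γ` (`2γ ∈ ℕ`).  For `j ∈ ℂ` the numbers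
`q_μ = -(j+μ)(j+μ+1)`, `μ ∈ M_γ = {-γ, -γ+1, …, γ}`, are pairwise distinct if and only if
`j` is not a half-integer, or `j` is a half-integer with `j > γ - 1` or `j < -γ`. -/
theorem casimir_eigenvalues_distinct_iff
    (γ : ℚ) (hγ : ∃ k : ℕ, 0 < k ∧ (k : ℚ) = 2 * γ) (j : ℂ) :
    (∀ μ ν : ℚ, ((∃ a : ℕ, μ = -γ + a) ∧ μ ≤ γ) → ((∃ b : ℕ, ν = -γ + b) ∧ ν ≤ γ) →
      μ ≠ ν → -((j + (μ : ℂ)) * (j + (μ : ℂ) + 1)) ≠ -((j + (ν : ℂ)) * (j + (ν : ℂ) + 1))) ↔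
    ((¬ ∃ k : ℤ, j = (k : ℂ) / 2) ∨
      ∃ k : ℤ, j = (k : ℂ) / 2 ∧ ((k : ℚ) / 2 > γ - 1 ∨ (k : ℚ) / 2 < -γ)) := by
  obtain ⟨n, -, hnγ⟩ := hγ
  obtain rfl : γ = n / 2 := by linarith
  constructor
  · intro H
    by_contra! hc
    obtain ⟨⟨k, rfl⟩, hk⟩ := hc
    obtain ⟨hk1, hk2⟩ := hk k rfl
    have hlt : (k : ℚ) ≤ n - 2 := by linarith
    have hge : -(n : ℚ) ≤ k := by linarith
    have hlt' : k ≤ n - 2 := by exact_mod_cast hlt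
    have hge' : -(n : ℤ) ≤ k := by exact_mod_cast hge
    obtain ⟨a, b, hab, hbn, hs⟩ :=
      exists_lt_le_add_eq (n := n) (s := n - 1 - k) (by omega) (by omega)
    have habQ : (a : ℚ) < b := by exact_mod_cast hab
    have hbnQ : (b : ℚ) ≤ n := by exact_mod_cast hbn
    have hne : (-(n / 2) + a : ℚ) ≠ -(n / 2) + b := by
      intro h
      linarith
    refine H _ _ ⟨⟨a, rfl⟩, by linarith⟩ ⟨⟨b, rfl⟩, by linarith⟩ hne ?_
    rw [neg_mul_add_one_eq_iff (by exact_mod_cast hne)]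
    have hsC : (a + b : ℂ) = n - 1 - k := by exact_mod_cast hs
    push_cast
    linear_combination hsC
  · rintro H _ _ ⟨⟨a, rfl⟩, ha⟩ ⟨⟨b, rfl⟩, hb⟩ hne heq
    rw [neg_mul_add_one_eq_iff (by exact_mod_cast hne)] at heq
    push_cast at heq
    have han : a ≤ n := by
      have : (a : ℚ) ≤ n := by linarith
      exact_mod_cast this
    have hbn : b ≤ n := by
      have : (b : ℚ) ≤ n := by linarith
      exact_mod_cast this
    have hab : a ≠ b := by
      rintro rfl
      exact hne rfl
    rcases H with H | ⟨k, rfl, hk⟩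
    · refine H ⟨n - 1 - a - b, ?_⟩
      push_cast
      linear_combination heq / 2
    · have hkC : (k : ℂ) = n - 1 - a - b := by linear_combination heq
      have hkZ : k = n - 1 - a - b := by exact_mod_cast hkC
      rcases hk with hk | hk
      · have : (n : ℚ) - 2 < k := by linarith
        have : (n : ℤ) - 2 < k := by exact_mod_cast this
        omega
      · have : (k : ℚ) < -n := by linarith
        have : k < -(n : ℤ) := by exact_mod_cast this
        omega
end

section
/- Let γ with 2γ ∈ ℕ, A ∈ {+1,−1}, λ a half-integer (2λ ∈ ℤ) and ρ ∈ ℂ with ρ ∉ ±(|λ|+ℕ) (i.e. ρ ≠ (|λ|+k) and ρ ≠ −(|λ|+k) for every integer k ≥ 1). Set M_γ = {−γ, −γ+1, …, γ}. Then the two conditions 'i(λ+μ)(ρ+Aμ) ≠ i(λ+ν)(ρ+Aν) for all μ ≠ ν in M_γ' and '(λ+μ)² + (ρ+Aμ)² − 1 ≠ (λ+ν)² + (ρ+Aν)² − 1 for all μ ≠ ν in M_γ' both hold if and only if ρ + Aλ is not equal to any integer m with −2γ < m < 2γ. -/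
/-- The sums of two distinct elements of `{-γ, -γ + 1, …, γ}` include every integer in
`(-2γ, 2γ)`. -/
lemma exists_distinct_weights_add_eq {γ : ℚ} (hγ : ∃ k : ℕ, 0 < k ∧ (k : ℚ) = 2 * γ) {n : ℤ}
    (h₁ : -(2 * γ) < (n : ℚ)) (h₂ : (n : ℚ) < 2 * γ) :
    ∃ μ ν : ℚ, ((∃ a : ℕ, μ = -γ + a) ∧ μ ≤ γ) ∧ ((∃ b : ℕ, ν = -γ + b) ∧ ν ≤ γ) ∧ μ ≠ ν ∧
      μ + ν = n := by
  obtain ⟨k, hk, hkγ⟩ := hγ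
  rw [← hkγ] at h₁ h₂
  have h₁' : -(k : ℤ) < n := by exact_mod_cast h₁
  have h₂' : n < (k : ℤ) := by exact_mod_cast h₂
  obtain ⟨a, b, ha, hb, hab, hsum⟩ :
      ∃ a b : ℕ, a ≤ k ∧ b ≤ k ∧ a ≠ b ∧ (a : ℤ) + b = n + k := by
    rcases le_or_gt n 0 with hn | hn
    · exact ⟨0, (n + k).toNat, by omega, by omega, by omega, by omega⟩
    · exact ⟨k, n.toNat, by omega, by omega, by omega, by omega⟩
  have ha' : (a : ℚ) ≤ k := by exact_mod_cast ha
  have hb' : (b : ℚ) ≤ k := by exact_mod_cast hb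
  have hab' : (a : ℚ) ≠ b := by exact_mod_cast hab
  have hsum' : (a : ℚ) + b = n + k := by exact_mod_cast hsum
  exact ⟨-γ + a, -γ + b, ⟨⟨a, rfl⟩, by linarith⟩, ⟨⟨b, rfl⟩, by linarith⟩,
    fun h => hab' (add_left_cancel h), by linarith⟩

/-- The sum of two distinct elements of `{-γ, -γ + 1, …, γ}` is an integer in `(-2γ, 2γ)`. -/
lemma exists_int_eq_add_of_distinct_weights {γ : ℚ} (hγ : ∃ k : ℕ, 0 < k ∧ (k : ℚ) = 2 * γ)
    {μ ν : ℚ} (hμ : (∃ a : ℕ, μ = -γ + a) ∧ μ ≤ γ) (hν : (∃ b : ℕ, ν = -γ + b) ∧ ν ≤ γ)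
    (hne : μ ≠ ν) : ∃ n : ℤ, -(2 * γ) < (n : ℚ) ∧ (n : ℚ) < 2 * γ ∧ μ + ν = n := by
  obtain ⟨k, -, hkγ⟩ := hγ
  obtain ⟨⟨a, rfl⟩, ha⟩ := hμ
  obtain ⟨⟨b, rfl⟩, hb⟩ := hν
  have ha₀ : (0 : ℚ) ≤ a := a.cast_nonneg
  have hb₀ : (0 : ℚ) ≤ b := b.cast_nonneg
  refine ⟨a + b - k, ?_, ?_, ?_⟩
  · push_cast
    rcases lt_or_gt_of_ne hne with h | h <;> linarith
  · push_cast
    rcases lt_or_gt_of_ne hne with h | h <;> linarith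
  · push_cast
    linarith

/-- Two values of the first eigenvalue at distinct `x`, `y` agree iff `ρ + A l = -A (x + y)`. -/
lemma first_casimir_eq_iff {A l ρ x y : ℂ} (hxy : x ≠ y) :
    Complex.I * (l + x) * (ρ + A * x) = Complex.I * (l + y) * (ρ + A * y) ↔
      ρ + A * l = -A * (x + y) := by
  have hc : Complex.I * (x - y) ≠ 0 := mul_ne_zero Complex.I_ne_zero (sub_ne_zero.mpr hxy)
  constructor
  · intro h
    apply mul_left_cancel₀ hc
    linear_combination h
  · intro h
    linear_combination Complex.I * (x - y) * h

/-- Two values of the second eigenvalue at distinct `x`, `y` agree iff `ρ + A l = -A (x + y)`. -/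
lemma second_casimir_eq_iff {A l ρ x y : ℂ} (hA : A ^ 2 = 1) (hxy : x ≠ y) :
    (l + x) ^ 2 + (ρ + A * x) ^ 2 - 1 = (l + y) ^ 2 + (ρ + A * y) ^ 2 - 1 ↔
      ρ + A * l = -A * (x + y) := by
  constructor
  · intro h
    apply mul_left_cancel₀ (sub_ne_zero.mpr hxy)
    linear_combination A / 2 * h - (x - y) * (ρ + A * (x + y) / 2) * hA
  · intro h
    linear_combination 2 * A * (x - y) * h - (x - y) * (2 * l + x + y) * hA

/-- For a positive half-integer `γ`, a half-integer `l`, `A = ±1` and `ρ ∈ ℂ` with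
`ρ ∉ ±(|l| + ℕ)`, the eigenvalue pairs `(i(l+μ)(ρ+Aμ), (l+μ)² + (ρ+Aμ)² - 1)`,
`μ ∈ M_γ`, are distinct in both components (for `μ ≠ ν`) if and only if
`ρ + A·l` is not an integer in the open interval `(-2γ, 2γ)`. -/
theorem lorentz_casimir_eigenvalues_distinct_iff
    (γ l : ℚ) (hγ : ∃ k : ℕ, 0 < k ∧ (k : ℚ) = 2 * γ)
    (hl : ∃ k : ℤ, (k : ℚ) = 2 * l)
    (A : ℤ) (hA : A = 1 ∨ A = -1) (ρ : ℂ)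
    (hρ : ∀ k : ℕ, 1 ≤ k → ρ ≠ ((|l| : ℚ) : ℂ) + (k : ℂ) ∧ ρ ≠ -(((|l| : ℚ) : ℂ) + (k : ℂ))) :
    ((∀ μ ν : ℚ, ((∃ a : ℕ, μ = -γ + a) ∧ μ ≤ γ) → ((∃ b : ℕ, ν = -γ + b) ∧ ν ≤ γ) → μ ≠ ν →
        Complex.I * ((l : ℂ) + (μ : ℂ)) * (ρ + (A : ℂ) * (μ : ℂ)) ≠
        Complex.I * ((l : ℂ) + (ν : ℂ)) * (ρ + (A : ℂ) * (ν : ℂ))) ∧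
     (∀ μ ν : ℚ, ((∃ a : ℕ, μ = -γ + a) ∧ μ ≤ γ) → ((∃ b : ℕ, ν = -γ + b) ∧ ν ≤ γ) → μ ≠ ν →
        ((l : ℂ) + (μ : ℂ)) ^ 2 + (ρ + (A : ℂ) * (μ : ℂ)) ^ 2 - 1 ≠
        ((l : ℂ) + (ν : ℂ)) ^ 2 + (ρ + (A : ℂ) * (ν : ℂ)) ^ 2 - 1)) ↔
    ¬ ∃ m : ℤ, -(2 * γ) < (m : ℚ) ∧ (m : ℚ) < 2 * γ ∧ ρ + (A : ℂ) * (l : ℂ) = (m : ℂ) := by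
  have hA2 : (A : ℂ) ^ 2 = 1 := by rcases hA with rfl | rfl <;> norm_num
  have neg_mul_mem : ∀ n : ℤ, -(2 * γ) < (n : ℚ) → (n : ℚ) < 2 * γ →
      -(2 * γ) < ((-A * n : ℤ) : ℚ) ∧ ((-A * n : ℤ) : ℚ) < 2 * γ := by
    intro n h₁ h₂
    rcases hA with rfl | rfl <;> push_cast <;> constructor <;> linarith
  constructor
  · rintro ⟨hfirst, -⟩ ⟨m, h₁, h₂, hm⟩
    obtain ⟨hn₁, hn₂⟩ := neg_mul_mem m h₁ h₂
    obtain ⟨μ, ν, hμ, hν, hne, hsum⟩ := exists_distinct_weights_add_eq hγ hn₁ hn₂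
    have hsum' : (μ : ℂ) + ν = -A * m := by exact_mod_cast congrArg (Rat.cast : ℚ → ℂ) hsum
    refine hfirst μ ν hμ hν hne ((first_casimir_eq_iff (Rat.cast_injective.ne hne)).mpr ?_)
    linear_combination hm + (A : ℂ) * hsum' - (m : ℂ) * hA2
  · intro hnot
    have key : ∀ μ ν : ℚ, ((∃ a : ℕ, μ = -γ + a) ∧ μ ≤ γ) → ((∃ b : ℕ, ν = -γ + b) ∧ ν ≤ γ) →
        μ ≠ ν → ρ + (A : ℂ) * (l : ℂ) ≠ -(A : ℂ) * ((μ : ℂ) + (ν : ℂ)) := by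
      intro μ ν hμ hν hne h
      obtain ⟨n, h₁, h₂, hsum⟩ := exists_int_eq_add_of_distinct_weights hγ hμ hν hne
      have hsum' : (μ : ℂ) + ν = n := by exact_mod_cast congrArg (Rat.cast : ℚ → ℂ) hsum
      obtain ⟨hn₁, hn₂⟩ := neg_mul_mem n h₁ h₂
      refine hnot ⟨-A * n, hn₁, hn₂, ?_⟩
      rw [h, hsum']
      push_cast
      ring
    exact ⟨fun μ ν hμ hν hne h =>
        key μ ν hμ hν hne ((first_casimir_eq_iff (Rat.cast_injective.ne hne)).mp h),
      fun μ ν hμ hν hne h =>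
        key μ ν hμ hν hne ((second_casimir_eq_iff hA2 (Rat.cast_injective.ne hne)).mp h)⟩
end

section
/- Let n ≥ 1, η = fromBlocks 1ₙ 0 0 (−1ₙ) ∈ M_{2n}(ℂ), and let g ∈ M_{2n}(ℂ) satisfy g* η g = η. Write g = fromBlocks A B C D in n×n blocks. Then A and D are invertible, and det g = det D / det(A*). In particular this holds for every element of G^ε(2n), hence of SO*(2n) and Sp(2n,ℝ). -/
open Matrix

/-- The indefinite Hermitian form `η = diag(1ₙ, -1ₙ)`. -/
noncomputable def eta (n : ℕ) : Matrix (Fin n ⊕ Fin n) (Fin n ⊕ Fin n) ℂ :=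
  fromBlocks 1 0 0 (-1)

namespace Matrix

open scoped ComplexOrder

/-- If `Xᴴ * X = 1 + Yᴴ * Y`, then the square matrix `X` is invertible. -/
theorem isUnit_of_conjTranspose_mul_self_eq_one_add {m k : Type*} [Fintype m] [DecidableEq m]
    [Fintype k] {X : Matrix m m ℂ} {Y : Matrix k m ℂ} (h : Xᴴ * X = 1 + Yᴴ * Y) : IsUnit X := by
  have hpos : (Xᴴ * X).PosDef :=
    h ▸ PosDef.one.add_posSemidef (posSemidef_conjTranspose_mul_self Y)
  exact isUnit_of_mul_isUnit_right hpos.isUnit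

end Matrix

/-- If `g* η g = η` with `g = fromBlocks A B C D`, then `A` and `D` are invertible and
`det g = det D / det (A*)`. -/
theorem blocks_invertible_and_det
    {n : ℕ} (hn : 1 ≤ n) (A B C D : Matrix (Fin n) (Fin n) ℂ)
    (h : (fromBlocks A B C D)ᴴ * eta n * fromBlocks A B C D = eta n) :
    IsUnit A ∧ IsUnit D ∧ (fromBlocks A B C D).det = D.det / Aᴴ.det := by
  simp only [eta, fromBlocks_conjTranspose, fromBlocks_multiply, fromBlocks_inj, mul_one, mul_zero,
    mul_neg, neg_mul, add_zero, zero_add] at h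
  obtain ⟨h₁₁, h₁₂, -, h₂₂⟩ := h
  have hA : IsUnit A := isUnit_of_conjTranspose_mul_self_eq_one_add (Y := C) <| by
    rw [← h₁₁]; abel
  have hD : IsUnit D := isUnit_of_conjTranspose_mul_self_eq_one_add (Y := B) <| by
    rw [← neg_neg (1 : Matrix (Fin n) (Fin n) ℂ), ← h₂₂]; abel
  refine ⟨hA, hD, ?_⟩
  have hAdet : Aᴴ.det ≠ 0 := by
    rw [det_conjTranspose]
    exact star_ne_zero.mpr ((isUnit_iff_isUnit_det A).mp hA).ne_zero
  have hmul : fromBlocks Aᴴ (-Cᴴ) 0 1 * fromBlocks A B C D = fromBlocks 1 0 C D := by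
    simp [fromBlocks_multiply, h₁₁, h₁₂]
  have hdet := congrArg det hmul
  rw [det_mul, det_fromBlocks_zero₂₁, det_fromBlocks_zero₁₂, det_one, mul_one, one_mul] at hdet
  rw [eq_div_iff hAdet, mul_comm, hdet]
end

section
/- Fix ε ∈ {+1,−1} and n ≥ 1, and let g = fromBlocks A B C D ∈ G^ε(2n). Then necessarily C = ε·conj(B) and D = conj(A). Conversely, if g = fromBlocks A B (ε·conj B) (conj A) satisfies g* η g = η and gᵀ J_ε g = J_ε, then det g = 1 holds automatically, so g ∈ G^ε(2n). -/
open Matrix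

/-- Entrywise complex conjugation of a matrix. -/
noncomputable def mconj {n : ℕ} (M : Matrix (Fin n) (Fin n) ℂ) : Matrix (Fin n) (Fin n) ℂ :=
  M.map (starRingEnd ℂ)

/-- The bilinear form `J_ε` defining `G^ε(2n)` inside `SU(n,n)`. -/
noncomputable def Jmat (n : ℕ) (ε : ℂ) : Matrix (Fin n ⊕ Fin n) (Fin n ⊕ Fin n) ℂ :=
  fromBlocks 0 1 (-(ε • (1 : Matrix (Fin n) (Fin n) ℂ))) 0

/-- Membership in `G^ε(2n)`: `det g = 1`, `g* η g = η` and `gᵀ J_ε g = J_ε`;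
`G^{-1}(2n) = SO*(2n)` and `G^{+1}(2n) = Sp(2n,ℝ)`. -/
def Geps (n : ℕ) (ε : ℂ) (g : Matrix (Fin n ⊕ Fin n) (Fin n ⊕ Fin n) ℂ) : Prop :=
  g.det = 1 ∧ gᴴ * eta n * g = eta n ∧ gᵀ * Jmat n ε * g = Jmat n ε

/-- An `η`-unitary block matrix has right inverse `η gᴴ η`. -/
theorem fromBlocks_mul_inverse_of_eta {n : ℕ} {A B C D : Matrix (Fin n) (Fin n) ℂ}
    (h : (fromBlocks A B C D)ᴴ * eta n * fromBlocks A B C D = eta n) :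
    fromBlocks A B C D * fromBlocks Aᴴ (-Cᴴ) (-Bᴴ) Dᴴ = 1 := by
  rw [mul_eq_one_comm]
  have hη : eta n * eta n = 1 := by
    simp [eta, fromBlocks_multiply, fromBlocks_one]
  have hinv : fromBlocks Aᴴ (-Cᴴ) (-Bᴴ) Dᴴ = eta n * (fromBlocks A B C D)ᴴ * eta n := by
    simp [eta, fromBlocks_multiply, fromBlocks_conjTranspose]
  rw [hinv, mul_assoc, mul_assoc, ← mul_assoc _ (eta n) (fromBlocks A B C D), h, hη]

open scoped ComplexOrder in
/-- The upper left block of an `η`-unitary matrix is invertible. -/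
theorem det_upper_left_ne_zero_of_eta {n : ℕ} {A B C D : Matrix (Fin n) (Fin n) ℂ}
    (h : (fromBlocks A B C D)ᴴ * eta n * fromBlocks A B C D = eta n) : A.det ≠ 0 := by
  simp only [eta, fromBlocks_conjTranspose, fromBlocks_multiply, fromBlocks_inj] at h
  have hA : Aᴴ * A = 1 + Cᴴ * C := by
    rw [← h.1]
    simp
  have hpos : (Aᴴ * A).PosDef := by
    rw [hA]
    exact PosDef.one.add_posSemidef (posSemidef_conjTranspose_mul_self C)
  intro h0
  have hdet := hpos.det_pos.ne'
  simp [det_mul, h0] at hdet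

/-- For an `η`-unitary block matrix `g`, `det g * conj (det D) = det A`. -/
theorem det_fromBlocks_mul_star_det_of_eta {n : ℕ} {A B C D : Matrix (Fin n) (Fin n) ℂ}
    (h : (fromBlocks A B C D)ᴴ * eta n * fromBlocks A B C D = eta n) :
    (fromBlocks A B C D).det * star D.det = A.det := by
  have hinv := fromBlocks_mul_inverse_of_eta h
  rw [fromBlocks_multiply, ← fromBlocks_one, fromBlocks_inj] at hinv
  have hmul : fromBlocks A B C D * fromBlocks 1 (-Cᴴ) 0 Dᴴ = fromBlocks A 0 C 1 := by
    rw [fromBlocks_multiply, hinv.2.1, hinv.2.2.2]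
    simp
  simpa [det_mul, det_conjTranspose] using congrArg det hmul

/-- Any `g = fromBlocks A B C D ∈ G^ε(2n)` has `C = ε·conj B` and `D = conj A`; conversely,
for a matrix of this block form satisfying the `η`- and `J_ε`-invariance conditions,
`det g = 1` holds automatically, so `g ∈ G^ε(2n)`. -/
theorem Geps_block_form
    {n : ℕ} (hn : 1 ≤ n) (ε : ℂ) (hε : ε = 1 ∨ ε = -1) :
    (∀ A B C D : Matrix (Fin n) (Fin n) ℂ, Geps n ε (fromBlocks A B C D) →
      C = ε • mconj B ∧ D = mconj A) ∧
    (∀ A B : Matrix (Fin n) (Fin n) ℂ,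
      (fromBlocks A B (ε • mconj B) (mconj A))ᴴ * eta n *
        fromBlocks A B (ε • mconj B) (mconj A) = eta n →
      (fromBlocks A B (ε • mconj B) (mconj A))ᵀ * Jmat n ε *
        fromBlocks A B (ε • mconj B) (mconj A) = Jmat n ε →
      Geps n ε (fromBlocks A B (ε • mconj B) (mconj A))) := by
  have hεε : ε * ε = 1 := by rcases hε with rfl | rfl <;> norm_num
  refine ⟨?_, fun A B hη hJ => ⟨?_, hη, hJ⟩⟩
  · rintro A B C D ⟨-, hη, hJ⟩
    have hinv := fromBlocks_mul_inverse_of_eta hη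
    have key : (fromBlocks A B C D)ᵀ * Jmat n ε =
        Jmat n ε * fromBlocks Aᴴ (-Cᴴ) (-Bᴴ) Dᴴ := by
      rw [← hJ, mul_assoc _ (fromBlocks A B C D), hinv, mul_one, hJ]
    simp only [Jmat, fromBlocks_transpose, fromBlocks_multiply, fromBlocks_inj] at key
    obtain ⟨hC, hD, -, -⟩ := key
    simp only [mul_zero, zero_mul, mul_one, one_mul, add_zero, zero_add, mul_neg,
      neg_inj] at hC hD
    constructor
    · ext i j
      have hij : ε * C i j = star (B i j) := by
        simpa using congrFun (congrFun hC j) i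
      calc C i j = ε * (ε * C i j) := by rw [← mul_assoc, hεε, one_mul]
        _ = (ε • mconj B) i j := by rw [hij]; rfl
    · ext i j
      have hij : A i j = star (D i j) := by
        simpa using congrFun (congrFun hD j) i
      simp [mconj, hij]
  · have hdet := det_fromBlocks_mul_star_det_of_eta hη
    have hconj : star (mconj A).det = A.det := by
      rw [← det_conjTranspose, ← det_transpose]
      congr 1
      ext i j
      simp [mconj]
    rw [hconj] at hdet
    exact mul_right_cancel₀ (det_upper_left_ne_zero_of_eta hη) (hdet.trans (one_mul _).symm)
end

section
/- Fix ε ∈ {+1,−1} and n ≥ 1. (i) For every ζ ∈ Ω^ε_n, the block matrix g_ζ = fromBlocks S (ζ·T) (ζ*·S) T, where S is the unique positive-definite square root of (1ₙ − ζζ*)⁻¹ and T the unique positive-definite square root of (1ₙ − ζ*ζ)⁻¹, belongs to G^ε(2n) and satisfies g_ζ(0) = (ζ·T)·T⁻¹ = ζ. (ii) Consequently the action of G^ε(2n) on Ω^ε_n is transitive: for all ζ, ω ∈ Ω^ε_n there exists g = fromBlocks A B C D ∈ G^ε(2n) with Cζ+D invertible and (Aζ+B)(Cζ+D)⁻¹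 = ω. -/
open Matrix ComplexOrder

open scoped MatrixOrder in
/-- Two positive-definite matrices with the same square coincide. -/
theorem posDef_eq_of_mul_self_eq {n : ℕ} {A B : Matrix (Fin n) (Fin n) ℂ}
    (hA : A.PosDef) (hB : B.PosDef) (h : A * A = B * B) : A = B :=
  (CFC.mul_self_eq_mul_self_iff A B hA.posSemidef.nonneg hB.posSemidef.nonneg).mp h

open scoped MatrixOrder in
/-- A positive-definite matrix has a positive-definite square root. -/
theorem exists_posDef_mul_self_eq {n : ℕ} {P : Matrix (Fin n) (Fin n) ℂ} (hP : P.PosDef) :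
    ∃ Q : Matrix (Fin n) (Fin n) ℂ, Q.PosDef ∧ Q * Q = P := by
  have hsq : CFC.sqrt P * CFC.sqrt P = P := CFC.sqrt_mul_sqrt_self P hP.posSemidef.nonneg
  have hnonneg : 0 ≤ CFC.sqrt P := CFC.sqrt_nonneg P
  refine ⟨CFC.sqrt P, ?_, hsq⟩
  rw [← Matrix.isStrictlyPositive_iff_posDef]
  exact (CFC.isUnit_sqrt_iff P hP.posSemidef.nonneg |>.mpr hP.isUnit).isStrictlyPositive hnonneg

/-- If `S² = P⁻¹` with `P` and `S` invertible, then `S P S = 1`. -/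
theorem mul_mul_eq_one_of_mul_self_eq_inv {n : ℕ} {S P : Matrix (Fin n) (Fin n) ℂ}
    (hP : IsUnit P) (h : S * S = P⁻¹) : S * P * S = 1 := by
  have hdet : IsUnit P.det := (Matrix.isUnit_iff_isUnit_det P).mp hP
  rw [mul_eq_one_comm, ← Matrix.mul_assoc, h, Matrix.nonsing_inv_mul P hdet]

theorem conjTranspose_transpose_of_transpose_eq_smul {n : ℕ} {ε : ℂ} (hε : ε = 1 ∨ ε = -1)
    {ζ : Matrix (Fin n) (Fin n) ℂ} (hζ : ζᵀ = ε • ζ) : ζᴴᵀ = ε • ζᴴ := by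
  have h : ζᴴᵀ = ζᵀᴴ := rfl
  rw [h, hζ, conjTranspose_smul]
  rcases hε with rfl | rfl <;> simp

theorem transpose_one_sub_conjTranspose_mul_self {n : ℕ} {ε : ℂ} (hε : ε = 1 ∨ ε = -1)
    {ζ : Matrix (Fin n) (Fin n) ℂ} (hζ : ζᵀ = ε • ζ) :
    (1 - ζᴴ * ζ)ᵀ = 1 - ζ * ζᴴ := by
  rw [transpose_sub, transpose_one, transpose_mul, hζ,
    conjTranspose_transpose_of_transpose_eq_smul hε hζ]
  rcases hε with rfl | rfl <;> simp

theorem Geps.mul {n : ℕ} {ε : ℂ} {g h : Matrix (Fin n ⊕ Fin n) (Fin n ⊕ Fin n) ℂ}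
    (hg : Geps n ε g) (hh : Geps n ε h) : Geps n ε (g * h) := by
  obtain ⟨hgdet, hgeta, hgJ⟩ := hg
  obtain ⟨hhdet, hheta, hhJ⟩ := hh
  refine ⟨by rw [det_mul, hgdet, hhdet, one_mul], ?_, ?_⟩
  · calc (g * h)ᴴ * eta n * (g * h) = hᴴ * (gᴴ * eta n * g) * h := by
          simp only [conjTranspose_mul, Matrix.mul_assoc]
      _ = eta n := by rw [hgeta, hheta]
  · calc (g * h)ᵀ * Jmat n ε * (g * h) = hᵀ * (gᵀ * Jmat n ε * g) * h := by
          simp only [transpose_mul, Matrix.mul_assoc]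
      _ = Jmat n ε := by rw [hgJ, hhJ]

theorem Geps.of_mul_eq_one {n : ℕ} {ε : ℂ} {g h : Matrix (Fin n ⊕ Fin n) (Fin n ⊕ Fin n) ℂ}
    (hg : Geps n ε g) (hgh : g * h = 1) : Geps n ε h := by
  obtain ⟨hgdet, hgeta, hgJ⟩ := hg
  refine ⟨?_, ?_, ?_⟩
  · simpa [hgdet] using congrArg det hgh
  · calc hᴴ * eta n * h = hᴴ * (gᴴ * eta n * g) * h := by rw [hgeta]
      _ = (g * h)ᴴ * eta n * (g * h) := by simp only [conjTranspose_mul, Matrix.mul_assoc]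
      _ = eta n := by simp [hgh]
  · calc hᵀ * Jmat n ε * h = hᵀ * (gᵀ * Jmat n ε * g) * h := by rw [hgJ]
      _ = (g * h)ᵀ * Jmat n ε * (g * h) := by simp only [transpose_mul, Matrix.mul_assoc]
      _ = Jmat n ε := by simp [hgh]

section Transvection

variable {n : ℕ} {ε : ℂ} {ζ S T : Matrix (Fin n) (Fin n) ℂ}

theorem posDef_one_sub_mul_conjTranspose_self (hε : ε = 1 ∨ ε = -1) (hζ : ζᵀ = ε • ζ)
    (hQ : (1 - ζᴴ * ζ).PosDef) : (1 - ζ * ζᴴ).PosDef :=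
  transpose_one_sub_conjTranspose_mul_self hε hζ ▸ hQ.transpose

/-- The square roots `S` and `T` are transposes of each other. -/
theorem transpose_sqrt_eq (hε : ε = 1 ∨ ε = -1) (hζ : ζᵀ = ε • ζ)
    (hS : S.PosDef) (hSS : S * S = (1 - ζ * ζᴴ)⁻¹)
    (hT : T.PosDef) (hTT : T * T = (1 - ζᴴ * ζ)⁻¹) : Tᵀ = S := by
  refine posDef_eq_of_mul_self_eq hT.transpose hS ?_
  rw [← transpose_mul, hTT, transpose_nonsing_inv,
    transpose_one_sub_conjTranspose_mul_self hε hζ, hSS]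

theorem conjTranspose_mul_eta_mul_fromBlocks (hS : Sᴴ = S) (hT : Tᴴ = T)
    (hSPS : S * (1 - ζ * ζᴴ) * S = 1) (hTQT : T * (1 - ζᴴ * ζ) * T = 1) :
    (fromBlocks S (ζ * T) (ζᴴ * S) T)ᴴ * eta n * fromBlocks S (ζ * T) (ζᴴ * S) T = eta n := by
  simp only [mul_sub, sub_mul, mul_one, ← Matrix.mul_assoc] at hSPS hTQT
  simp only [eta, fromBlocks_conjTranspose, fromBlocks_multiply, conjTranspose_mul, hS, hT,
    conjTranspose_conjTranspose, mul_one, mul_zero, add_zero, zero_add, mul_neg, neg_mul,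
    ← Matrix.mul_assoc]
  rw [fromBlocks_inj]
  refine ⟨?_, ?_, ?_, ?_⟩
  · rw [← hSPS, sub_eq_add_neg]
  · exact add_neg_cancel _
  · exact add_neg_cancel _
  · rw [← hTQT]; abel

theorem transpose_mul_Jmat_mul_fromBlocks (hε : ε = 1 ∨ ε = -1) (hζ : ζᵀ = ε • ζ)
    (hST : Sᵀ = T) (hTS : Tᵀ = S)
    (hSPS : S * (1 - ζ * ζᴴ) * S = 1) (hTQT : T * (1 - ζᴴ * ζ) * T = 1) :
    (fromBlocks S (ζ * T) (ζᴴ * S) T)ᵀ * Jmat n ε * fromBlocks S (ζ * T) (ζᴴ * S) T =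
      Jmat n ε := by
  have hεε : ε * ε = 1 := by rcases hε with rfl | rfl <;> simp
  simp only [mul_sub, sub_mul, mul_one, ← Matrix.mul_assoc] at hSPS hTQT
  simp only [Jmat, fromBlocks_transpose, fromBlocks_multiply, transpose_mul, hST, hTS, hζ,
    conjTranspose_transpose_of_transpose_eq_smul hε hζ, mul_one, mul_zero, add_zero, zero_add,
    mul_neg, neg_mul, ← Matrix.mul_assoc, mul_smul_comm, smul_mul_assoc, smul_smul, hεε, one_smul]
  rw [fromBlocks_inj]
  refine ⟨?_, ?_, ?_, ?_⟩
  · exact neg_add_cancel _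
  · rw [← hTQT]; abel
  · rw [← hSPS, smul_sub]; abel
  · exact neg_add_cancel _

theorem det_fromBlocks_eq_one (hTS : Tᵀ = S) (hT : IsUnit T)
    (hSPS : S * (1 - ζ * ζᴴ) * S = 1) : (fromBlocks S (ζ * T) (ζᴴ * S) T).det = 1 := by
  have hdet : IsUnit T.det := (Matrix.isUnit_iff_isUnit_det T).mp hT
  let := Matrix.invertibleOfIsUnitDet T hdet
  have hschur : S - ζ * T * ⅟T * (ζᴴ * S) = (1 - ζ * ζᴴ) * S := by
    rw [mul_invOf_cancel_right, sub_mul, one_mul, Matrix.mul_assoc]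
  have hST : T.det = S.det := by rw [← hTS, det_transpose]
  rw [det_fromBlocks₂₂, hschur, hST, ← det_mul, ← Matrix.mul_assoc, hSPS, det_one]

theorem Geps_fromBlocks (hε : ε = 1 ∨ ε = -1) (hζ : ζᵀ = ε • ζ) (hQ : (1 - ζᴴ * ζ).PosDef)
    (hS : S.PosDef) (hSS : S * S = (1 - ζ * ζᴴ)⁻¹)
    (hT : T.PosDef) (hTT : T * T = (1 - ζᴴ * ζ)⁻¹) :
    Geps n ε (fromBlocks S (ζ * T) (ζᴴ * S) T) := by
  have hP := posDef_one_sub_mul_conjTranspose_self hε hζ hQ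
  have hSPS := mul_mul_eq_one_of_mul_self_eq_inv hP.isUnit hSS
  have hTQT := mul_mul_eq_one_of_mul_self_eq_inv hQ.isUnit hTT
  have hTS := transpose_sqrt_eq hε hζ hS hSS hT hTT
  have hST : Sᵀ = T := by rw [← hTS, transpose_transpose]
  exact ⟨det_fromBlocks_eq_one hTS hT.isUnit hSPS,
    conjTranspose_mul_eta_mul_fromBlocks hS.isHermitian hT.isHermitian hSPS hTQT,
    transpose_mul_Jmat_mul_fromBlocks hε hζ hST hTS hSPS hTQT⟩

theorem fromBlocks_neg_mul_fromBlocks (hSPS : S * (1 - ζ * ζᴴ) * S = 1)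
    (hTQT : T * (1 - ζᴴ * ζ) * T = 1) :
    fromBlocks S (-(S * ζ)) (-(T * ζᴴ)) T * fromBlocks S (ζ * T) (ζᴴ * S) T = 1 := by
  simp only [mul_sub, sub_mul, mul_one, ← Matrix.mul_assoc] at hSPS hTQT
  rw [fromBlocks_multiply, ← fromBlocks_one, fromBlocks_inj]
  simp only [neg_mul, ← Matrix.mul_assoc]
  refine ⟨?_, ?_, ?_, ?_⟩
  · rw [← hSPS, sub_eq_add_neg]
  · exact add_neg_cancel _
  · exact neg_add_cancel _
  · rw [← hTQT]; abel

theorem exists_posDef_sqrts (hε : ε = 1 ∨ ε = -1) (hζ : ζᵀ = ε • ζ)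
    (hQ : (1 - ζᴴ * ζ).PosDef) :
    ∃ S T : Matrix (Fin n) (Fin n) ℂ, S.PosDef ∧ S * S = (1 - ζ * ζᴴ)⁻¹ ∧
      T.PosDef ∧ T * T = (1 - ζᴴ * ζ)⁻¹ := by
  obtain ⟨S, hS, hSS⟩ :=
    exists_posDef_mul_self_eq (posDef_one_sub_mul_conjTranspose_self hε hζ hQ).inv
  obtain ⟨T, hT, hTT⟩ := exists_posDef_mul_self_eq hQ.inv
  exact ⟨S, T, hS, hSS, hT, hTT⟩

end Transvection

/-- (i) For `ζ ∈ Ω^ε_n`, with `S` (resp. `T`) the positive-definite square root of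
`(1 - ζζ*)⁻¹` (resp. `(1 - ζ*ζ)⁻¹`), the matrix `g_ζ = fromBlocks S (ζT) (ζ*S) T`
belongs to `G^ε(2n)` and sends `0` to `(ζT)T⁻¹ = ζ`.
(ii) Consequently `G^ε(2n)` acts transitively on `Ω^ε_n`. -/
theorem Geps_transitive
    {n : ℕ} (hn : 1 ≤ n) (ε : ℂ) (hε : ε = 1 ∨ ε = -1) :
    (∀ ζ S T : Matrix (Fin n) (Fin n) ℂ,
      ζᵀ = ε • ζ → ((1 : Matrix (Fin n) (Fin n) ℂ) - ζᴴ * ζ).PosDef →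
      S.PosDef → S * S = ((1 : Matrix (Fin n) (Fin n) ℂ) - ζ * ζᴴ)⁻¹ →
      T.PosDef → T * T = ((1 : Matrix (Fin n) (Fin n) ℂ) - ζᴴ * ζ)⁻¹ →
      Geps n ε (fromBlocks S (ζ * T) (ζᴴ * S) T) ∧ (ζ * T) * T⁻¹ = ζ) ∧
    (∀ ζ ω : Matrix (Fin n) (Fin n) ℂ,
      ζᵀ = ε • ζ → ((1 : Matrix (Fin n) (Fin n) ℂ) - ζᴴ * ζ).PosDef →
      ωᵀ = ε • ω → ((1 : Matrix (Fin n) (Fin n) ℂ) - ωᴴ * ω).PosDef →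
      ∃ A B C D : Matrix (Fin n) (Fin n) ℂ,
        Geps n ε (fromBlocks A B C D) ∧ IsUnit (C * ζ + D) ∧
        (A * ζ + B) * (C * ζ + D)⁻¹ = ω) := by
  refine ⟨fun ζ S T hζ hQ hS hSS hT hTT => ⟨Geps_fromBlocks hε hζ hQ hS hSS hT hTT, ?_⟩, ?_⟩
  · exact mul_nonsing_inv_cancel_right _ _ ((Matrix.isUnit_iff_isUnit_det T).mp hT.isUnit)
  intro ζ ω hζ hQ hω hR
  obtain ⟨S, T, hS, hSS, hT, hTT⟩ := exists_posDef_sqrts hε hζ hQ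
  obtain ⟨U, V, hU, hUU, hV, hVV⟩ := exists_posDef_sqrts hε hω hR
  have hSPS := mul_mul_eq_one_of_mul_self_eq_inv
    (posDef_one_sub_mul_conjTranspose_self hε hζ hQ).isUnit hSS
  have hTQT := mul_mul_eq_one_of_mul_self_eq_inv hQ.isUnit hTT
  have hinv := (Geps_fromBlocks hε hζ hQ hS hSS hT hTT).of_mul_eq_one
    (mul_eq_one_comm.mp (fromBlocks_neg_mul_fromBlocks hSPS hTQT))
  have hprod := (Geps_fromBlocks hε hω hR hU hUU hV hVV).mul hinv
  rw [fromBlocks_multiply] at hprod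
  have hden : (ωᴴ * U * S + V * -(T * ζᴴ)) * ζ + (ωᴴ * U * -(S * ζ) + V * T) =
      V * T * (1 - ζᴴ * ζ) := by
    noncomm_ring
  have hnum : (U * S + ω * V * -(T * ζᴴ)) * ζ + (U * -(S * ζ) + ω * V * T) =
      ω * (V * T * (1 - ζᴴ * ζ)) := by
    noncomm_ring
  have hunit : IsUnit (V * T * (1 - ζᴴ * ζ)) := (hV.isUnit.mul hT.isUnit).mul hQ.isUnit
  refine ⟨_, _, _, _, hprod, hden ▸ hunit, ?_⟩
  rw [hden, hnum]
  exact mul_nonsing_inv_cancel_right _ _ ((Matrix.isUnit_iff_isUnit_det _).mp hunit)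
end

section
/- Let g = fromBlocks A B (−conj B) (conj A) ∈ SO*(2n), so A, B ∈ Mₙ(ℂ) satisfy AA* − BB* = 1ₙ, A*A − Bᵀ·conj(B) = 1ₙ, A*B = −Bᵀ·conj(A), BAᵀ = −ABᵀ (whence A is invertible). Then B·conj(A)⁻¹ and conj(A)⁻¹·conj(B) are anti-symmetric, (A*)⁻¹ − B·conj(A)⁻¹·conj(B) = A, and g admits the block UDL factorization g = (fromBlocks 1ₙ (B·conj(A)⁻¹) 0 1ₙ) · (fromBlocks (A*)⁻¹ 0 0 (conj A)) · (fromBlocks 1ₙ 0 (−conj(A)⁻¹·conj(B)) 1ₙ). -/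
open Matrix

open scoped ComplexOrder in
/-- If `A A* - B B* = 1`, then `A A*` is positive definite, so `A` is invertible. -/
theorem isUnit_of_mul_conjTranspose_sub_eq_one {m n : Type*} [Fintype m] [DecidableEq m]
    [Fintype n] {A : Matrix m m ℂ} {B : Matrix m n ℂ} (h : A * Aᴴ - B * Bᴴ = 1) : IsUnit A := by
  have hAA : (A * Aᴴ).PosDef := by
    rw [sub_eq_iff_eq_add.mp h]
    exact PosDef.one.add_posSemidef (posSemidef_self_mul_conjTranspose B)
  have hdet := (isUnit_iff_isUnit_det _).mp hAA.isUnit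
  rw [det_mul] at hdet
  exact (isUnit_iff_isUnit_det A).mpr (isUnit_of_mul_isUnit_left hdet)

/-- Block UDL decomposition of an element `g = fromBlocks A B (-conj B) (conj A)` of
`SO*(2n)`: `A` is invertible, `B (conj A)⁻¹` and `(conj A)⁻¹ (conj B)` are anti-symmetric,
`(A*)⁻¹ - B (conj A)⁻¹ (conj B) = A`, and `g` factors as an upper-triangular, a
block-diagonal and a lower-triangular block matrix. -/
theorem so_star_UDL
    {n : ℕ} (A B : Matrix (Fin n) (Fin n) ℂ)
    (h1 : A * Aᴴ - B * Bᴴ = 1)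
    (h2 : Aᴴ * A - Bᵀ * mconj B = 1)
    (h3 : Aᴴ * B = -(Bᵀ * mconj A))
    (h4 : B * Aᵀ = -(A * Bᵀ)) :
    IsUnit A ∧
    (B * (mconj A)⁻¹)ᵀ = -(B * (mconj A)⁻¹) ∧
    ((mconj A)⁻¹ * mconj B)ᵀ = -((mconj A)⁻¹ * mconj B) ∧
    (Aᴴ)⁻¹ - B * (mconj A)⁻¹ * mconj B = A ∧
    fromBlocks A B (-(mconj B)) (mconj A) =
      fromBlocks 1 (B * (mconj A)⁻¹) 0 1 *
      fromBlocks (Aᴴ)⁻¹ 0 0 (mconj A) *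
      fromBlocks 1 0 (-((mconj A)⁻¹ * mconj B)) 1 := by
  have hA : IsUnit A := isUnit_of_mul_conjTranspose_sub_eq_one h1
  have hH : IsUnit (Aᴴ).det := (isUnit_iff_isUnit_det _).mp ((isUnit_conjTranspose A).mpr hA)
  have hCt : (mconj A)ᵀ = Aᴴ := rfl
  have hC : IsUnit (mconj A).det := by rw [← det_transpose, hCt]; exact hH
  have hBC : (Aᴴ)⁻¹ * Bᵀ = -(B * (mconj A)⁻¹) := by
    calc (Aᴴ)⁻¹ * Bᵀ = (Aᴴ)⁻¹ * (Bᵀ * mconj A) * (mconj A)⁻¹ := by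
          rw [Matrix.mul_assoc, mul_nonsing_inv_cancel_right _ _ hC]
      _ = -(B * (mconj A)⁻¹) := by
          rw [← neg_eq_iff_eq_neg.mpr h3, Matrix.mul_neg, nonsing_inv_mul_cancel_left _ _ hH,
            Matrix.neg_mul]
  have h4' : mconj B * Aᴴ = -(mconj A * (mconj B)ᵀ) := by
    have h := congrArg conjTranspose (congrArg transpose h4)
    simp only [transpose_mul, transpose_neg, transpose_transpose, conjTranspose_mul,
      conjTranspose_neg] at h
    exact h
  have hschur : (Aᴴ)⁻¹ - B * (mconj A)⁻¹ * mconj B = A := by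
    rw [← neg_eq_iff_eq_neg.mpr hBC, Matrix.neg_mul, sub_neg_eq_add, Matrix.mul_assoc]
    calc (Aᴴ)⁻¹ + (Aᴴ)⁻¹ * (Bᵀ * mconj B) = (Aᴴ)⁻¹ * (1 + Bᵀ * mconj B) := by
          rw [Matrix.mul_add, Matrix.mul_one]
      _ = A := by rw [← sub_eq_iff_eq_add.mp h2, nonsing_inv_mul_cancel_left _ _ hH]
  refine ⟨hA, ?_, ?_, hschur, ?_⟩
  · rw [transpose_mul, transpose_nonsing_inv, hCt, hBC]
  · rw [transpose_mul, transpose_nonsing_inv, hCt]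
    calc (mconj B)ᵀ * (Aᴴ)⁻¹ = (mconj A)⁻¹ * (mconj A * (mconj B)ᵀ) * (Aᴴ)⁻¹ := by
          rw [nonsing_inv_mul_cancel_left _ _ hC]
      _ = -((mconj A)⁻¹ * mconj B) := by
          rw [← neg_eq_iff_eq_neg.mpr h4', Matrix.mul_neg, Matrix.neg_mul, Matrix.mul_assoc,
            mul_nonsing_inv_cancel_right _ _ hH]
  · simp only [fromBlocks_multiply, Matrix.one_mul, Matrix.mul_one, Matrix.zero_mul,
      Matrix.mul_zero, add_zero, zero_add, nonsing_inv_mul_cancel_right _ _ hC, Matrix.mul_neg,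
      mul_nonsing_inv_cancel_left _ _ hC]
    rw [← Matrix.mul_assoc, ← sub_eq_add_neg, hschur]
end

section
/- Let A ∈ Mₙ(ℂ) be symmetric (Aᵀ = A) with positive-definite real part (the real symmetric matrix (A + conj A)/2 is positive definite); then A is invertible and S := ∫_{ℝⁿ} exp(−½ xᵀAx) dⁿx converges. For any k ∈ ℕ and indices a₁,…,a_k ∈ {1,…,n}, ∫_{ℝⁿ} x_{a₁}⋯x_{a_k} · exp(−½ xᵀAx) dⁿx = S · (∂/∂J_{a₁} ⋯ ∂/∂J_{a_k}) exp(½ JᵀA⁻¹J) evaluated at J = 0, where the iterated partial derivatives are of the function J ↦ exp(½ JᵀA⁻¹J) on ℝⁿ. In particular the left-hand side vanishes whenever k is odd. -/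
open MeasureTheory Matrix

/-- The quadratic form `xᵀ M x = ∑_{i,j} M i j * x i * x j`. -/
noncomputable def quadC {n : ℕ} (M : Matrix (Fin n) (Fin n) ℂ) (x : Fin n → ℂ) : ℂ :=
  ∑ i, ∑ j, M i j * x i * x j

theorem quadC_eq_dotProduct {n : ℕ} (M : Matrix (Fin n) (Fin n) ℂ) (x : Fin n → ℂ) :
    quadC M x = x ⬝ᵥ M *ᵥ x := by
  simp only [quadC, dotProduct, mulVec, Finset.mul_sum]
  exact Finset.sum_congr rfl fun i _ => Finset.sum_congr rfl fun j _ => by ring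

theorem dotProduct_mulVec_comm_of_transpose_eq {n : ℕ} {M : Matrix (Fin n) (Fin n) ℂ}
    (hM : Mᵀ = M) (x v : Fin n → ℂ) : x ⬝ᵥ M *ᵥ v = v ⬝ᵥ M *ᵥ x := by
  rw [dotProduct_mulVec, ← mulVec_transpose, hM, dotProduct_comm]

theorem quadC_add_smul {n : ℕ} {M : Matrix (Fin n) (Fin n) ℂ} (hM : Mᵀ = M) (t : ℂ)
    (x v : Fin n → ℂ) :
    quadC M (x + t • v) = quadC M x + t * (2 * (v ⬝ᵥ M *ᵥ x)) + t ^ 2 * quadC M v := by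
  simp only [quadC_eq_dotProduct, mulVec_add, mulVec_smul, add_dotProduct, dotProduct_add,
    smul_dotProduct, dotProduct_smul, smul_eq_mul, dotProduct_mulVec_comm_of_transpose_eq hM x v]
  ring

theorem quadC_ofReal_re {n : ℕ} (A : Matrix (Fin n) (Fin n) ℂ) (x : Fin n → ℝ) :
    (quadC A fun i => (x i : ℂ)).re
      = x ⬝ᵥ (Matrix.of fun i j => (A i j).re : Matrix (Fin n) (Fin n) ℝ) *ᵥ x := by
  simp only [quadC, dotProduct, mulVec, Finset.mul_sum, Complex.re_sum, Complex.re_mul_ofReal,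
    Matrix.of_apply]
  exact Finset.sum_congr rfl fun i _ => Finset.sum_congr rfl fun j _ => by ring

/-- A complex symmetric matrix with positive-definite real part is invertible. -/
theorem isUnit_of_posDef_re {n : ℕ} {A : Matrix (Fin n) (Fin n) ℂ} (hsym : Aᵀ = A)
    (hpos : (Matrix.of fun i j => (A i j).re : Matrix (Fin n) (Fin n) ℝ).PosDef) :
    IsUnit A := by
  rw [Matrix.isUnit_iff_isUnit_det, isUnit_iff_ne_zero]
  intro hdet
  obtain ⟨v, hv, hAv⟩ := Matrix.exists_mulVec_eq_zero_iff.mpr hdet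
  set u : Fin n → ℂ := fun i => ((v i).re : ℂ)
  set w : Fin n → ℂ := fun i => ((v i).im : ℂ)
  have hvuw : v = u + Complex.I • w := by
    ext i
    simp only [u, w, Pi.add_apply, Pi.smul_apply, smul_eq_mul]
    rw [mul_comm, Complex.re_add_im]
  have hsum : quadC A u + quadC A w = 0 := by
    have h0 : (u - Complex.I • w) ⬝ᵥ A *ᵥ v = 0 := by rw [hAv, dotProduct_zero]
    rw [hvuw] at h0
    simp only [mulVec_add, mulVec_smul, sub_dotProduct, dotProduct_add, smul_dotProduct,
      dotProduct_smul, smul_eq_mul, dotProduct_mulVec_comm_of_transpose_eq hsym u w] at h0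
    rw [quadC_eq_dotProduct, quadC_eq_dotProduct]
    linear_combination h0 + (w ⬝ᵥ A *ᵥ w) * Complex.I_sq
  have hre := congrArg Complex.re hsum
  rw [Complex.add_re, quadC_ofReal_re, quadC_ofReal_re, Complex.zero_re] at hre
  have hu := hpos.posSemidef.dotProduct_mulVec_nonneg fun i => (v i).re
  have hw := hpos.posSemidef.dotProduct_mulVec_nonneg fun i => (v i).im
  simp only [star_trivial] at hu hw
  have zero_of : ∀ y : Fin n → ℝ,
      y ⬝ᵥ (Matrix.of fun i j => (A i j).re : Matrix (Fin n) (Fin n) ℝ) *ᵥ y ≤ 0 → y = 0 := by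
    intro y hy
    by_contra hne
    have := hpos.dotProduct_mulVec_pos hne
    simp only [star_trivial] at this
    linarith
  have hu0 := zero_of (fun i => (v i).re) (by linarith)
  have hw0 := zero_of (fun i => (v i).im) (by linarith)
  exact hv (funext fun i => Complex.ext (congrFun hu0 i) (congrFun hw0 i))

/-- A positive-definite real quadratic form dominates a multiple of the sum of squares. -/
theorem exists_pos_mul_sum_sq_le {n : ℕ} {R : Matrix (Fin n) (Fin n) ℝ} (hR : R.PosDef) :
    ∃ c : ℝ, 0 < c ∧ ∀ x : Fin n → ℝ, c * ∑ i, x i ^ 2 ≤ x ⬝ᵥ R *ᵥ x := by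
  have hcomp : IsCompact {x : Fin n → ℝ | ∑ i, x i ^ 2 = 1} := by
    refine Metric.isCompact_of_isClosed_isBounded
      (isClosed_eq (by fun_prop) continuous_const) ?_
    refine (Metric.isBounded_closedBall (x := (0 : Fin n → ℝ)) (r := 1)).subset fun x hx => ?_
    rw [mem_closedBall_zero_iff, pi_norm_le_iff_of_nonneg zero_le_one]
    intro i
    rw [Real.norm_eq_abs, ← sq_le_one_iff_abs_le_one, ← (show ∑ i, x i ^ 2 = 1 from hx)]
    exact Finset.single_le_sum (f := fun i => x i ^ 2) (fun j _ => sq_nonneg _)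
      (Finset.mem_univ i)
  have hcont : Continuous fun x : Fin n → ℝ => x ⬝ᵥ R *ᵥ x := by
    simp only [dotProduct, mulVec]
    fun_prop
  have hzero : ∀ x : Fin n → ℝ, ∑ i, x i ^ 2 = 0 → x = 0 := by
    intro x hx
    rw [Finset.sum_eq_zero_iff_of_nonneg fun i _ => sq_nonneg _] at hx
    exact funext fun i => by simpa using hx i (Finset.mem_univ i)
  have hnorm : ∀ x : Fin n → ℝ, x ≠ 0 →
      ∑ i, ((√(∑ i, x i ^ 2))⁻¹ • x) i ^ 2 = 1 := by
    intro x hx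
    have hne : ∑ i, x i ^ 2 ≠ 0 := fun h => hx (hzero x h)
    simp only [Pi.smul_apply, smul_eq_mul, mul_pow, ← Finset.mul_sum, inv_pow]
    rw [Real.sq_sqrt (Finset.sum_nonneg fun i _ => sq_nonneg _), inv_mul_cancel₀ hne]
  rcases Set.eq_empty_or_nonempty {x : Fin n → ℝ | ∑ i, x i ^ 2 = 1} with hempty | hne
  · refine ⟨1, one_pos, fun x => ?_⟩
    have hx : x = 0 := by
      by_contra hx
      exact (Set.eq_empty_iff_forall_notMem.mp hempty) _ (hnorm x hx)
    simp [hx]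
  · obtain ⟨y, hy, hmin⟩ := hcomp.exists_isMinOn hne hcont.continuousOn
    have hy0 : y ≠ 0 := by
      rintro rfl
      simp at hy
    refine ⟨y ⬝ᵥ R *ᵥ y, by simpa using hR.dotProduct_mulVec_pos hy0, fun x => ?_⟩
    by_cases hx : x = 0
    · simp [hx]
    have hpos : 0 < ∑ i, x i ^ 2 :=
      lt_of_le_of_ne (Finset.sum_nonneg fun i _ => sq_nonneg _) fun h => hx (hzero x h.symm)
    have h := isMinOn_iff.mp hmin _ (hnorm x hx)
    rw [mulVec_smul, smul_dotProduct, dotProduct_smul, smul_smul, ← mul_inv,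
      Real.mul_self_sqrt hpos.le, smul_eq_mul, inv_mul_eq_div, le_div_iff₀ hpos] at h
    exact h

theorem exists_pos_mul_sum_sq_le_quadC_re {n : ℕ} {A : Matrix (Fin n) (Fin n) ℂ}
    (hpos : (Matrix.of fun i j => (A i j).re : Matrix (Fin n) (Fin n) ℝ).PosDef) :
    ∃ c : ℝ, 0 < c ∧
      ∀ x : Fin n → ℝ, c * ∑ i, x i ^ 2 ≤ (quadC A fun i => (x i : ℂ)).re := by
  obtain ⟨c, hc, h⟩ := exists_pos_mul_sum_sq_le hpos
  exact ⟨c, hc, fun x => (h x).trans_eq (quadC_ofReal_re A x).symm⟩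

theorem integrable_exp_neg_sum_sq_add_sum_abs (n : ℕ) {c : ℝ} (hc : 0 < c) (K : ℝ) :
    Integrable fun x : Fin n → ℝ => Real.exp (-c * ∑ i, x i ^ 2 + K * ∑ i, |x i|) := by
  have h1 : Integrable fun s : ℝ => Real.exp (-c * s ^ 2 + K * |s|) := by
    refine ((integrable_exp_neg_mul_sq (half_pos hc)).const_mul
      (Real.exp (K ^ 2 / (2 * c)))).mono' (by fun_prop) (.of_forall fun s => ?_)
    rw [Real.norm_eq_abs, Real.abs_exp, ← Real.exp_add]
    refine Real.exp_le_exp.mpr ?_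
    have h : K ^ 2 / (2 * c) + -(c / 2) * s ^ 2 - (-c * s ^ 2 + K * |s|)
        = (K - c * |s|) ^ 2 / (2 * c) := by
      field_simp
      rw [← sq_abs s]
      ring
    have : 0 ≤ (K - c * |s|) ^ 2 / (2 * c) := by positivity
    linarith
  refine (Integrable.fintype_prod (ι := Fin n) fun _ => h1).congr (.of_forall fun x => ?_)
  simp only [← Real.exp_sum, Finset.sum_add_distrib, Finset.mul_sum]

/-- The Gaussian `exp (-½ xᵀAx)` with source term `exp (Jᵀx)`. -/
noncomputable def gaussianSource {n : ℕ} (A : Matrix (Fin n) (Fin n) ℂ) (J x : Fin n → ℝ) : ℂ :=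
  Complex.exp (-(1 / 2 : ℂ) * quadC A (fun i => (x i : ℂ)) + ∑ i, (J i : ℂ) * x i)

theorem gaussianSource_zero {n : ℕ} (A : Matrix (Fin n) (Fin n) ℂ) (x : Fin n → ℝ) :
    gaussianSource A 0 x = Complex.exp (-(1 / 2 : ℂ) * quadC A fun i => (x i : ℂ)) := by
  simp [gaussianSource]

theorem continuous_gaussianSource {n : ℕ} (A : Matrix (Fin n) (Fin n) ℂ) (J : Fin n → ℝ) :
    Continuous (gaussianSource A J) := by
  unfold gaussianSource quadC
  fun_prop

theorem norm_gaussianSource_le {n : ℕ} {A : Matrix (Fin n) (Fin n) ℂ} {c : ℝ}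
    (hA : ∀ x : Fin n → ℝ, c * ∑ i, x i ^ 2 ≤ (quadC A fun i => (x i : ℂ)).re)
    {J : Fin n → ℝ} {K : ℝ} (hJ : ∀ i, |J i| ≤ K) (x : Fin n → ℝ) :
    ‖gaussianSource A J x‖ ≤ Real.exp (-(c / 2) * ∑ i, x i ^ 2 + K * ∑ i, |x i|) := by
  rw [gaussianSource, Complex.norm_exp]
  refine Real.exp_le_exp.mpr ?_
  have hlin : (∑ i, (J i : ℂ) * x i).re ≤ K * ∑ i, |x i| := by
    rw [Complex.re_sum, Finset.mul_sum]
    refine Finset.sum_le_sum fun i _ => ?_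
    rw [Complex.re_ofReal_mul, Complex.ofReal_re]
    exact (le_abs_self _).trans
      ((abs_mul _ _).trans_le (mul_le_mul_of_nonneg_right (hJ i) (abs_nonneg _)))
  have hquad : (-(1 / 2 : ℂ) * quadC A fun i => (x i : ℂ)).re
      = -(1 / 2) * (quadC A fun i => (x i : ℂ)).re := by
    rw [show (-(1 / 2 : ℂ)) = ((-(1 / 2) : ℝ) : ℂ) by push_cast; ring, Complex.re_ofReal_mul]
  rw [Complex.add_re, hquad]
  linarith [hA x]

theorem norm_prod_ofReal_le {n k : ℕ} (a : Fin k → Fin n) (x : Fin n → ℝ) :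
    ‖∏ i, (x (a i) : ℂ)‖ ≤ Real.exp (k * ∑ i, |x i|) := by
  rw [norm_prod, Real.exp_nat_mul]
  refine (Finset.prod_le_prod (fun i _ => norm_nonneg _) fun i _ => ?_).trans_eq
    (by rw [Finset.prod_const, Finset.card_fin])
  rw [Complex.norm_real, Real.norm_eq_abs]
  have h1 : |x (a i)| ≤ ∑ i, |x i| :=
    Finset.single_le_sum (f := fun i => |x i|) (fun j _ => abs_nonneg _) (Finset.mem_univ _)
  linarith [Real.add_one_le_exp (∑ i, |x i|)]

theorem norm_monomial_mul_gaussianSource_le {n k : ℕ} {A : Matrix (Fin n) (Fin n) ℂ} {c : ℝ}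
    (hA : ∀ x : Fin n → ℝ, c * ∑ i, x i ^ 2 ≤ (quadC A fun i => (x i : ℂ)).re)
    (a : Fin k → Fin n) {J : Fin n → ℝ} {K : ℝ} (hJ : ∀ i, |J i| ≤ K) (x : Fin n → ℝ) :
    ‖(∏ i, (x (a i) : ℂ)) * gaussianSource A J x‖
      ≤ Real.exp (-(c / 2) * ∑ i, x i ^ 2 + (k + K) * ∑ i, |x i|) := by
  rw [norm_mul]
  refine (mul_le_mul (norm_prod_ofReal_le a x) (norm_gaussianSource_le hA hJ x)
    (norm_nonneg _) (Real.exp_pos _).le).trans_eq ?_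
  rw [← Real.exp_add]
  ring_nf

theorem continuous_monomial_mul_gaussianSource {n k : ℕ} (A : Matrix (Fin n) (Fin n) ℂ)
    (a : Fin k → Fin n) (J : Fin n → ℝ) :
    Continuous fun x : Fin n → ℝ => (∏ i, (x (a i) : ℂ)) * gaussianSource A J x :=
  Continuous.mul (by fun_prop) (continuous_gaussianSource A J)

theorem integrable_monomial_mul_gaussianSource {n k : ℕ} {A : Matrix (Fin n) (Fin n) ℂ}
    (hpos : (Matrix.of fun i j => (A i j).re : Matrix (Fin n) (Fin n) ℝ).PosDef)
    (a : Fin k → Fin n) (J : Fin n → ℝ) :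
    Integrable fun x : Fin n → ℝ => (∏ i, (x (a i) : ℂ)) * gaussianSource A J x := by
  obtain ⟨c, hc, hA⟩ := exists_pos_mul_sum_sq_le_quadC_re hpos
  exact (integrable_exp_neg_sum_sq_add_sum_abs n (half_pos hc) (k + ∑ i, |J i|)).mono'
    (continuous_monomial_mul_gaussianSource A a J).aestronglyMeasurable
    (.of_forall fun x => norm_monomial_mul_gaussianSource_le hA a (fun i =>
      Finset.single_le_sum (f := fun i => |J i|) (fun j _ => abs_nonneg _)
        (Finset.mem_univ i)) x)

/-- Differentiating a Gaussian moment along a line in the space of sources. -/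
theorem hasDerivAt_integral_monomial_mul_gaussianSource {n k : ℕ} {A : Matrix (Fin n) (Fin n) ℂ}
    (hpos : (Matrix.of fun i j => (A i j).re : Matrix (Fin n) (Fin n) ℝ).PosDef)
    (a : Fin k → Fin n) (J v : Fin n → ℝ) (t : ℝ) :
    HasDerivAt
      (fun s : ℝ => ∫ x : Fin n → ℝ, (∏ i, (x (a i) : ℂ)) * gaussianSource A (J + s • v) x)
      (∑ b, (v b : ℂ) * ∫ x : Fin n → ℝ,
        (∏ i, (x ((Fin.cons b a : Fin (k + 1) → Fin n) i) : ℂ)) *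
          gaussianSource A (J + t • v) x) t := by
  obtain ⟨c, hc, hA⟩ := exists_pos_mul_sum_sq_le_quadC_re hpos
  set K : ℝ := ∑ i, |J i| + (|t| + 1) * ∑ i, |v i|
  have hK : ∀ s ∈ Metric.ball t 1, ∀ i, |(J + s • v) i| ≤ K := by
    intro s hs i
    have hs' : |s| ≤ |t| + 1 := by
      rw [Metric.mem_ball, Real.dist_eq] at hs
      linarith [abs_sub_abs_le_abs_sub s t]
    have h1 : |J i| ≤ ∑ i, |J i| :=
      Finset.single_le_sum (f := fun i => |J i|) (fun j _ => abs_nonneg _) (Finset.mem_univ i)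
    have h2 : |v i| ≤ ∑ i, |v i| :=
      Finset.single_le_sum (f := fun i => |v i|) (fun j _ => abs_nonneg _) (Finset.mem_univ i)
    calc |(J + s • v) i| ≤ |J i| + |s| * |v i| := by
          simpa [abs_mul] using abs_add_le (J i) (s * v i)
      _ ≤ K := add_le_add h1 (mul_le_mul hs' h2 (abs_nonneg _) (by positivity))
  have hsum : (∑ b, (v b : ℂ) * ∫ x : Fin n → ℝ,
        (∏ i, (x ((Fin.cons b a : Fin (k + 1) → Fin n) i) : ℂ)) *
          gaussianSource A (J + t • v) x)
      = ∫ x : Fin n → ℝ, ∑ b, (v b : ℂ) *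
        ((∏ i, (x ((Fin.cons b a : Fin (k + 1) → Fin n) i) : ℂ)) *
          gaussianSource A (J + t • v) x) := by
    rw [integral_finsetSum _ fun b _ =>
      (integrable_monomial_mul_gaussianSource hpos _ _).const_mul _]
    simp only [integral_const_mul]
  rw [hsum]
  refine (hasDerivAt_integral_of_dominated_loc_of_deriv_le
    (F := fun (s : ℝ) (x : Fin n → ℝ) =>
      (∏ i, (x (a i) : ℂ)) * gaussianSource A (J + s • v) x)
    (F' := fun (s : ℝ) (x : Fin n → ℝ) => ∑ b, (v b : ℂ) *
        ((∏ i, (x ((Fin.cons b a : Fin (k + 1) → Fin n) i) : ℂ)) *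
          gaussianSource A (J + s • v) x))
    (bound := fun x => ∑ b, |v b| *
      Real.exp (-(c / 2) * ∑ i, x i ^ 2 + ((k + 1 : ℕ) + K) * ∑ i, |x i|))
    (Metric.ball_mem_nhds t one_pos)
    (.of_forall fun s => (continuous_monomial_mul_gaussianSource A a _).aestronglyMeasurable)
    (integrable_monomial_mul_gaussianSource hpos a _)
    (continuous_finsetSum _ fun b _ => continuous_const.mul
      (continuous_monomial_mul_gaussianSource A _ _)).aestronglyMeasurable
    (.of_forall fun x s hs => ?_)
    (integrable_finsetSum _ fun b _ =>
      (integrable_exp_neg_sum_sq_add_sum_abs n (half_pos hc) _).const_mul _)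
    (.of_forall fun x s _ => ?_)).2
  · refine norm_sum_le_of_le _ fun b _ => ?_
    rw [norm_mul, Complex.norm_real, Real.norm_eq_abs]
    exact mul_le_mul_of_nonneg_left
      (norm_monomial_mul_gaussianSource_le hA _ (hK s hs) x) (abs_nonneg _)
  · have hlin : HasDerivAt (fun s : ℝ => ∑ i, (((J + s • v) i : ℝ) : ℂ) * x i)
        (∑ i, (v i : ℂ) * x i) s := by
      refine HasDerivAt.fun_sum fun i _ => HasDerivAt.mul_const ?_ _
      simpa using (((hasDerivAt_id s).mul_const (v i)).const_add (J i)).ofReal_comp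
    refine (((hlin.const_add (-(1 / 2 : ℂ) * quadC A fun i => (x i : ℂ))).cexp).const_mul
      (∏ i, (x (a i) : ℂ))).congr_deriv ?_
    simp only [Fin.prod_univ_succ, Fin.cons_zero, Fin.cons_succ, gaussianSource, Finset.mul_sum]
    exact Finset.sum_congr rfl fun b _ => by ring

/-- Integration by parts: the first moments in the presence of a source. -/
theorem mulVec_first_moment {n : ℕ} {A : Matrix (Fin n) (Fin n) ℂ} (hsym : Aᵀ = A)
    (hpos : (Matrix.of fun i j => (A i j).re : Matrix (Fin n) (Fin n) ℝ).PosDef)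
    (J : Fin n → ℝ) :
    A *ᵥ (fun b => ∫ x : Fin n → ℝ, (x b : ℂ) * gaussianSource A J x)
      = (∫ x : Fin n → ℝ, gaussianSource A J x) • fun b => (J b : ℂ) := by
  have hint : Integrable (gaussianSource A J) := by
    simpa using integrable_monomial_mul_gaussianSource hpos (k := 0) Fin.elim0 J
  have hint1 : ∀ b, Integrable fun x : Fin n → ℝ => (x b : ℂ) * gaussianSource A J x := by
    intro b
    simpa using integrable_monomial_mul_gaussianSource hpos (k := 1) (fun _ => b) J
  have hintA : ∀ b, Integrable fun x : Fin n → ℝ =>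
      ∑ j, A b j * ((x j : ℂ) * gaussianSource A J x) := fun b =>
    integrable_finsetSum _ fun j _ => (hint1 j).const_mul _
  ext b
  have hderiv : ∀ x : Fin n → ℝ, HasLineDerivAt ℝ (gaussianSource A J)
      ((J b : ℂ) * gaussianSource A J x - ∑ j, A b j * ((x j : ℂ) * gaussianSource A J x))
      x (Pi.single b 1) := by
    intro x
    have hpoly : HasDerivAt (fun t : ℝ => -(1 / 2 : ℂ) * (quadC A (fun i => (x i : ℂ))
        + (t : ℂ) * (2 * ((A *ᵥ fun i => (x i : ℂ)) b))
        + (t : ℂ) ^ 2 * quadC A (Pi.single b 1)) + (∑ i, (J i : ℂ) * x i + t * J b))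
        (J b - (A *ᵥ fun i => (x i : ℂ)) b) 0 := by
      have hid : HasDerivAt (fun t : ℝ => (t : ℂ)) 1 0 := (hasDerivAt_id (0 : ℝ)).ofReal_comp
      refine (((((hid.mul_const (2 * ((A *ᵥ fun i => (x i : ℂ)) b))).const_add
        (quadC A (fun i => (x i : ℂ)))).add
        ((hid.pow 2).mul_const (quadC A (Pi.single b 1)))).const_mul (-(1 / 2 : ℂ))).add
        ((hid.mul_const (J b : ℂ)).const_add (∑ i, (J i : ℂ) * x i))).congr_deriv ?_
      simp
      ring
    have hvec : ∀ t : ℝ, (fun i => (((x + t • (Pi.single b 1 : Fin n → ℝ)) i : ℝ) : ℂ))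
        = (fun i => (x i : ℂ)) + (t : ℂ) • (Pi.single b 1 : Fin n → ℂ) := by
      intro t
      ext i
      by_cases h : i = b
      · subst h; simp
      · simp [h]
    have hJ : ∀ t : ℝ, ∑ i, (J i : ℂ) * (((x + t • (Pi.single b 1 : Fin n → ℝ)) i : ℝ) : ℂ)
        = ∑ i, (J i : ℂ) * x i + t * J b := by
      intro t
      simp [mul_add, Finset.sum_add_distrib, Pi.single_apply, apply_ite Complex.ofReal, mul_comm]
    refine (hpoly.cexp.congr_of_eventuallyEq (.of_forall fun t => ?_)).congr_deriv ?_
    · simp only [gaussianSource]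
      rw [hJ, hvec, quadC_add_smul hsym, single_one_dotProduct]
    · simp only [gaussianSource, mulVec, dotProduct, Complex.ofReal_zero, zero_mul, add_zero,
        ne_eq, OfNat.ofNat_ne_zero, not_false_eq_true, zero_pow]
      rw [mul_sub, Finset.mul_sum]
      congr 1
      · ring
      · exact Finset.sum_congr rfl fun j _ => by ring
  have hzero := integral_bilinear_hasLineDerivAt_right_eq_neg_left_of_integrable
    (μ := (volume : Measure (Fin n → ℝ))) (f := fun _ => (1 : ℂ)) (f' := fun _ => 0)
    (g := gaussianSource A J)
    (g' := fun x => (J b : ℂ) * gaussianSource A J x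
      - ∑ j, A b j * ((x j : ℂ) * gaussianSource A J x))
    (v := Pi.single b 1) (B := ContinuousLinearMap.mul ℝ ℂ)
    (by simp) (by simpa using! (hint.const_mul (J b : ℂ)).sub (hintA b)) (by simpa using hint)
    (fun x _ => by simp [HasLineDerivAt, hasDerivAt_const]) (fun x _ => hderiv x)
  simp only [ContinuousLinearMap.mul_apply', one_mul, zero_mul, integral_zero, neg_zero] at hzero
  rw [integral_sub (hint.const_mul _) (hintA b), integral_const_mul,
    integral_finsetSum _ fun j _ => (hint1 j).const_mul _] at hzero
  simp only [integral_const_mul] at hzero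
  simp only [mulVec, dotProduct, Pi.smul_apply, smul_eq_mul]
  linear_combination -hzero

/-- The Gaussian integral with a source, as a function of the source. -/
theorem integral_gaussianSource {n : ℕ} {A : Matrix (Fin n) (Fin n) ℂ} (hsym : Aᵀ = A)
    (hpos : (Matrix.of fun i j => (A i j).re : Matrix (Fin n) (Fin n) ℝ).PosDef)
    (J : Fin n → ℝ) :
    ∫ x : Fin n → ℝ, gaussianSource A J x
      = (∫ x : Fin n → ℝ, gaussianSource A 0 x) *
        Complex.exp ((1 / 2 : ℂ) * quadC A⁻¹ fun i => (J i : ℂ)) := by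
  have hdet : IsUnit A.det := (Matrix.isUnit_iff_isUnit_det A).mp (isUnit_of_posDef_re hsym hpos)
  set q : ℂ := quadC A⁻¹ fun i => (J i : ℂ) with hq
  set φ : ℝ → ℂ := fun t => ∫ x : Fin n → ℝ, gaussianSource A (t • J) x with hφ
  have hφ' : ∀ t, HasDerivAt φ (t * q * φ t) t := by
    intro t
    have h := hasDerivAt_integral_monomial_mul_gaussianSource hpos (k := 0) Fin.elim0 0 J t
    simp only [Finset.univ_eq_empty, Finset.prod_empty, one_mul, zero_add, Fin.prod_univ_succ,
      Fin.cons_zero, mul_one] at h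
    refine h.congr_deriv ?_
    symm
    have hm := congrArg (A⁻¹ *ᵥ ·) (mulVec_first_moment hsym hpos (t • J))
    simp only [mulVec_mulVec, Matrix.nonsing_inv_mul _ hdet, one_mulVec] at hm
    change _ = (fun b => (J b : ℂ)) ⬝ᵥ
      (fun b => ∫ x : Fin n → ℝ, (x b : ℂ) * gaussianSource A (t • J) x)
    rw [hm, show (fun b => (((t • J) b : ℝ) : ℂ)) = (t : ℂ) • fun b => (J b : ℂ) by
      ext b; simp, mulVec_smul, mulVec_smul, dotProduct_smul, dotProduct_smul, hq,
      quadC_eq_dotProduct]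
    simp only [smul_eq_mul, hφ]
    ring
  have hconst : ∀ t, HasDerivAt
      (fun s : ℝ => φ s * Complex.exp (-((1 / 2 : ℂ) * ((s : ℂ) ^ 2 * q)))) 0 t := by
    intro t
    have hid : HasDerivAt (fun s : ℝ => (s : ℂ)) 1 t := (hasDerivAt_id t).ofReal_comp
    refine ((hφ' t).mul
      ((((hid.pow 2).mul_const q).const_mul (1 / 2 : ℂ)).fun_neg.cexp)).congr_deriv ?_
    simp
    ring
  have h := is_const_of_deriv_eq_zero (fun t => (hconst t).differentiableAt)
    (fun t => (hconst t).deriv) 1 0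
  simp only [hφ, one_smul, zero_smul, Complex.ofReal_one, one_pow, one_mul, Complex.ofReal_zero,
    ne_eq, OfNat.ofNat_ne_zero, not_false_eq_true, zero_pow, zero_mul, mul_zero, neg_zero,
    Complex.exp_zero, mul_one] at h
  rw [← h, mul_assoc, ← Complex.exp_add, neg_add_cancel, Complex.exp_zero, mul_one]

/-- The partial derivatives of the generating function are the moments. -/
theorem iteratedFDeriv_integral_gaussianSource {n : ℕ} {A : Matrix (Fin n) (Fin n) ℂ}
    (hpos : (Matrix.of fun i j => (A i j).re : Matrix (Fin n) (Fin n) ℝ).PosDef)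
    (hsmooth : ContDiff ℝ ⊤ fun J : Fin n → ℝ => ∫ x : Fin n → ℝ, gaussianSource A J x)
    (k : ℕ) (a : Fin k → Fin n) (J : Fin n → ℝ) :
    iteratedFDeriv ℝ k (fun J : Fin n → ℝ => ∫ x : Fin n → ℝ, gaussianSource A J x) J
        (fun i => Pi.single (a i) 1)
      = ∫ x : Fin n → ℝ, (∏ i, (x (a i) : ℂ)) * gaussianSource A J x := by
  induction k generalizing J with
  | zero => simp
  | succ k ih =>
    set G := fun J : Fin n → ℝ => ∫ x : Fin n → ℝ, gaussianSource A J x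
    have hd : DifferentiableAt ℝ (iteratedFDeriv ℝ k G) J :=
      hsmooth.differentiable_iteratedFDeriv (WithTop.coe_lt_top _) J
    have hline : HasDerivAt (fun s : ℝ => J + s • (Pi.single (a 0) 1 : Fin n → ℝ))
        (Pi.single (a 0) 1) 0 := by
      simpa using ((hasDerivAt_id (0 : ℝ)).smul_const (Pi.single (a 0) 1 : Fin n → ℝ)).const_add J
    have hleft := (ContinuousMultilinearMap.apply ℝ (fun _ : Fin k => Fin n → ℝ) ℂ
      (fun i => Pi.single (Fin.tail a i) 1)).hasFDerivAt.comp_hasDerivAt (0 : ℝ)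
      (hd.hasFDerivAt.comp_hasDerivAt_of_eq 0 hline (by simp))
    have hright := hasDerivAt_integral_monomial_mul_gaussianSource hpos (Fin.tail a) J
      (Pi.single (a 0) 1) 0
    simp only [← ih, zero_smul, add_zero] at hright
    rw [iteratedFDeriv_succ_apply_left]
    refine (hleft.unique hright).trans ?_
    rw [Finset.sum_eq_single (a 0) (fun b _ hb => by simp [hb]) (by simp)]
    simp [Fin.cons_self_tail]

/-- Moments of a (complex) Gaussian: for a symmetric `A ∈ Mₙ(ℂ)` with positive-definite
real part, `A` is invertible, `x ↦ exp(-½ xᵀAx)` is integrable on `ℝⁿ`, and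
`∫ x_{a₁}⋯x_{a_k} exp(-½ xᵀAx) = S · ∂_{J_{a₁}}⋯∂_{J_{a_k}} exp(½ JᵀA⁻¹J)|_{J=0}`,
where `S` is the Gaussian integral; in particular the moment vanishes for odd `k`. -/
theorem gaussian_moments
    {n : ℕ} (A : Matrix (Fin n) (Fin n) ℂ)
    (hsym : Aᵀ = A)
    (hpos : (Matrix.of fun i j => (A i j).re : Matrix (Fin n) (Fin n) ℝ).PosDef) :
    IsUnit A ∧
    Integrable (fun x : Fin n → ℝ =>
      Complex.exp (-(1 / 2 : ℂ) * quadC A fun i => (x i : ℂ))) ∧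
    ∀ (k : ℕ) (a : Fin k → Fin n),
      (∫ x : Fin n → ℝ, (∏ i, (x (a i) : ℂ)) *
          Complex.exp (-(1 / 2 : ℂ) * quadC A fun i => (x i : ℂ))) =
        (∫ x : Fin n → ℝ, Complex.exp (-(1 / 2 : ℂ) * quadC A fun i => (x i : ℂ))) *
          iteratedFDeriv ℝ k
            (fun J : Fin n → ℝ => Complex.exp ((1 / 2 : ℂ) * quadC A⁻¹ fun i => (J i : ℂ)))
            0 (fun i => Pi.single (a i) 1) ∧
      (Odd k →
        (∫ x : Fin n → ℝ, (∏ i, (x (a i) : ℂ)) *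
            Complex.exp (-(1 / 2 : ℂ) * quadC A fun i => (x i : ℂ))) = 0) := by
  refine ⟨isUnit_of_posDef_re hsym hpos, ?_, fun k a => ⟨?_, fun hk => ?_⟩⟩
  · simpa [gaussianSource_zero] using
      integrable_monomial_mul_gaussianSource hpos (k := 0) Fin.elim0 0
  · simp only [← gaussianSource_zero]
    have hE : ContDiff ℝ ⊤ fun J : Fin n → ℝ =>
        Complex.exp ((1 / 2 : ℂ) * quadC A⁻¹ fun i => (J i : ℂ)) := by
      have hcoord : ∀ i, ContDiff ℝ ⊤ fun J : Fin n → ℝ => (J i : ℂ) := fun i =>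
        Complex.ofRealCLM.contDiff.comp (contDiff_apply ℝ ℝ i)
      unfold quadC
      exact (contDiff_const.mul (ContDiff.sum fun i _ => ContDiff.sum fun j _ =>
        (contDiff_const.mul (hcoord i)).mul (hcoord j))).cexp
    have hG : (fun J : Fin n → ℝ => ∫ x : Fin n → ℝ, gaussianSource A J x)
        = (∫ x : Fin n → ℝ, gaussianSource A 0 x) • fun J : Fin n → ℝ =>
          Complex.exp ((1 / 2 : ℂ) * quadC A⁻¹ fun i => (J i : ℂ)) :=
      funext fun J => integral_gaussianSource hsym hpos J
    have hGsmooth : ContDiff ℝ ⊤ fun J : Fin n → ℝ => ∫ x : Fin n → ℝ, gaussianSource A J x := by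
      rw [hG]
      exact hE.const_smul (∫ x : Fin n → ℝ, gaussianSource A 0 x)
    rw [← iteratedFDeriv_integral_gaussianSource hpos hGsmooth k a 0, hG,
      iteratedFDeriv_const_smul_apply (hE.of_le le_top).contDiffAt]
    rfl
  · have hneg := integral_neg_eq_self (μ := (volume : Measure (Fin n → ℝ)))
      fun x : Fin n → ℝ => (∏ i, (x (a i) : ℂ)) *
        Complex.exp (-(1 / 2 : ℂ) * quadC A fun i => (x i : ℂ))
    have hflip : ∀ x : Fin n → ℝ, (∏ i, ((-x) (a i) : ℂ)) *
        Complex.exp (-(1 / 2 : ℂ) * quadC A fun i => (((-x) i : ℝ) : ℂ))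
        = -((∏ i, (x (a i) : ℂ)) *
          Complex.exp (-(1 / 2 : ℂ) * quadC A fun i => (x i : ℂ))) := by
      intro x
      simp [quadC, Finset.prod_neg, hk.neg_one_pow]
    simp only [hflip, integral_neg] at hneg
    exact self_eq_neg.mp hneg.symm
end

section
/- Let n ≥ 2, R = ℂ[x₁,…,xₙ,y₁,…,yₙ], and let ζ ∈ Mₙ(ℂ) be anti-symmetric (ζᵀ = −ζ) of rank 2. Define the ℂ-linear endomorphisms of R: F̃_ζ := multiplication by Σ_{a,b} ζ_{ab}·(y_a x_b − x_a y_b), and F_ζ := Σ_{a,b} conj(ζ_{ab})·(∂²/∂y_a∂x_b − ∂²/∂x_a∂y_b). Then for every integer J ≥ 1, (½F_ζ)·(½F̃_ζ)^J (1) = J(J+1)·(½ tr(ζ*ζ))·(½F̃_ζ)^{J−1} (1), and consequently (½F_ζ)^J·(½F̃_ζ)^J (1) = J!·(J+1)!·(½ tr(ζ*ζ))^J as constant polynomials, where 1 ∈ R is the constant polynomial. -/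
open MvPolynomial Matrix

/-- The polynomial `∑_{a,b} ζ_{ab} (y_a x_b - x_a y_b)`, multiplication by which realizes
the raising operator `F̃_ζ = ∑ ζ^{ab}(B_a†A_b† - A_a†B_b†)`. -/
noncomputable def fzeta (n : ℕ) (ζ : Matrix (Fin n) (Fin n) ℂ) :
    MvPolynomial (Fin n ⊕ Fin n) ℂ :=
  ∑ a, ∑ b, ζ a b • (X (Sum.inr a) * X (Sum.inl b) - X (Sum.inl a) * X (Sum.inr b))

/-- The lowering operator
`F_ζ = ∑_{a,b} conj(ζ_{ab}) (∂²/∂y_a∂x_b - ∂²/∂x_a∂y_b)` on `ℂ[x₁,…,xₙ,y₁,…,yₙ]`. -/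
noncomputable def Fzeta (n : ℕ) (ζ : Matrix (Fin n) (Fin n) ℂ)
    (p : MvPolynomial (Fin n ⊕ Fin n) ℂ) : MvPolynomial (Fin n ⊕ Fin n) ℂ :=
  ∑ a, ∑ b, (starRingEnd ℂ) (ζ a b) •
    (pderiv (Sum.inr a) (pderiv (Sum.inl b) p) - pderiv (Sum.inl a) (pderiv (Sum.inr b) p))

/-- The Plücker relations satisfied by the entries of an antisymmetric matrix of rank less than
four: all the `4 × 4` sub-Pfaffians vanish. -/
theorem plucker_of_rank_lt_four {ι K : Type*} [Fintype ι] [Field K] [CharZero K]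
    (A : Matrix ι ι K) (hanti : Aᵀ = -A) (hrank : A.rank < 4) (a b c d : ι) :
    A a c * A b d - A a d * A b c = A a b * A c d := by
  have hneg : ∀ i j, A j i = -A i j := fun i j => congrFun (congrFun hanti i) j
  have hdiag : ∀ i, A i i = 0 := fun i => self_eq_neg.mp (hneg i i)
  have hdet : (A.submatrix ![a, b, c, d] ![a, b, c, d]).det = 0 := by
    by_contra hne
    have hfull := Matrix.rank_of_isUnit _ <|
      (Matrix.isUnit_iff_isUnit_det _).mpr (isUnit_iff_ne_zero.mpr hne)
    have hle := A.rank_submatrix_le ![a, b, c, d] ![a, b, c, d]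
    simp only [Fintype.card_fin] at hfull
    omega
  have hpf : (A a b * A c d - A a c * A b d + A a d * A b c) ^ 2 = 0 := by
    rw [← hdet]
    simp only [Matrix.det_succ_row_zero, Fin.sum_univ_succ, Matrix.submatrix_apply]
    simp [Fin.succAbove, hdiag, hneg a b, hneg a c, hneg a d, hneg b c, hneg b d, hneg c d]
    ring
  linear_combination -(pow_eq_zero_iff two_ne_zero).mp hpf

theorem pderiv_pderiv_comm {σ R : Type*} [CommRing R] (i j : σ) (p : MvPolynomial σ R) :
    pderiv i (pderiv j p) = pderiv j (pderiv i p) := by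
  classical
  have h : ⁅pderiv (R := R) i, pderiv (R := R) j⁆ = 0 := derivation_ext fun k => by
    simp [Derivation.commutator_apply, pderiv_X, Pi.single_apply, apply_ite]
  have hp := congrArg (fun D : Derivation R (MvPolynomial σ R) (MvPolynomial σ R) => D p) h
  simpa [Derivation.commutator_apply, sub_eq_zero] using hp

/-- The bilinear form `∑_{a,b} ζ_{ab} y_a x_b`. -/
noncomputable def halfForm (n : ℕ) (ζ : Matrix (Fin n) (Fin n) ℂ) :
    MvPolynomial (Fin n ⊕ Fin n) ℂ :=
  ∑ a, ∑ b, C (ζ a b) * (X (Sum.inr a) * X (Sum.inl b))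

section

variable {n : ℕ} {ζ : Matrix (Fin n) (Fin n) ℂ}

theorem half_smul_fzeta (hneg : ∀ a b, ζ b a = -ζ a b) :
    (2⁻¹ : ℂ) • fzeta n ζ = halfForm n ζ := by
  have hswap : ∑ a, ∑ b, C (ζ a b) * (X (Sum.inl a) * X (Sum.inr b)) = -halfForm n ζ := by
    rw [halfForm, Finset.sum_comm, ← Finset.sum_neg_distrib]
    refine Finset.sum_congr rfl fun a _ => ?_
    rw [← Finset.sum_neg_distrib]
    refine Finset.sum_congr rfl fun b _ => ?_
    rw [hneg a b, C_neg]
    ring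
  have hf : fzeta n ζ = (2 : ℂ) • halfForm n ζ := by
    simp only [fzeta, smul_sub, Finset.sum_sub_distrib, smul_eq_C_mul] at hswap ⊢
    rw [hswap, halfForm, map_ofNat C]
    ring
  rw [hf, smul_smul, inv_mul_cancel₀ two_ne_zero, one_smul]

theorem half_smul_Fzeta (hneg : ∀ a b, ζ b a = -ζ a b) (p : MvPolynomial (Fin n ⊕ Fin n) ℂ) :
    (2⁻¹ : ℂ) • Fzeta n ζ p =
      ∑ a, ∑ b, C (star (ζ a b)) * pderiv (Sum.inr a) (pderiv (Sum.inl b) p) := by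
  have hcomm : ∀ i j, pderiv i (pderiv j p) = pderiv j (pderiv i p) := fun i j =>
    pderiv_pderiv_comm i j p
  have hswap : ∑ a, ∑ b, C (star (ζ a b)) * pderiv (Sum.inl a) (pderiv (Sum.inr b) p) =
      -∑ a, ∑ b, C (star (ζ a b)) * pderiv (Sum.inr a) (pderiv (Sum.inl b) p) := by
    rw [Finset.sum_comm, ← Finset.sum_neg_distrib]
    refine Finset.sum_congr rfl fun a _ => ?_
    rw [← Finset.sum_neg_distrib]
    refine Finset.sum_congr rfl fun b _ => ?_
    rw [hneg a b, star_neg, C_neg, hcomm]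
    ring
  have hF : Fzeta n ζ p =
      (2 : ℂ) • ∑ a, ∑ b, C (star (ζ a b)) * pderiv (Sum.inr a) (pderiv (Sum.inl b) p) := by
    simp only [Fzeta, smul_sub, Finset.sum_sub_distrib, smul_eq_C_mul, starRingEnd_apply]
    rw [hswap, map_ofNat C]
    ring
  rw [hF, smul_smul, inv_mul_cancel₀ two_ne_zero, one_smul]

theorem pderiv_inl_halfForm (b : Fin n) :
    pderiv (Sum.inl b) (halfForm n ζ) = ∑ c, C (ζ c b) * X (Sum.inr c) := by
  simp [halfForm, pderiv_X, Pi.single_apply, mul_comm]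

theorem pderiv_inr_halfForm (a : Fin n) :
    pderiv (Sum.inr a) (halfForm n ζ) = ∑ c, C (ζ a c) * X (Sum.inl c) := by
  simp [halfForm, pderiv_X, Pi.single_apply, mul_comm]

theorem pderiv_inr_pderiv_inl_halfForm (a b : Fin n) :
    pderiv (Sum.inr a) (pderiv (Sum.inl b) (halfForm n ζ)) = C (ζ a b) := by
  simp [pderiv_inl_halfForm, pderiv_X, Pi.single_apply]

theorem trace_conjTranspose_mul_self_eq_sum :
    (ζᴴ * ζ).trace = ∑ a, ∑ b, star (ζ a b) * ζ a b := by
  rw [Finset.sum_comm]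
  simp [Matrix.trace, Matrix.mul_apply]

/-- The contraction of the first derivatives of the form, evaluated by the Plücker relations. -/
theorem sum_pderiv_halfForm_mul (hneg : ∀ a b, ζ b a = -ζ a b)
    (hplucker : ∀ a b c d, ζ a c * ζ b d - ζ a d * ζ b c = ζ a b * ζ c d) :
    ∑ a, ∑ b, C (star (ζ a b)) *
        (pderiv (Sum.inr a) (halfForm n ζ) * pderiv (Sum.inl b) (halfForm n ζ)) =
      C ((ζᴴ * ζ).trace / 2) * halfForm n ζ := by
  set P := fun a => pderiv (Sum.inr a) (halfForm n ζ) with hP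
  set Q := fun b => pderiv (Sum.inl b) (halfForm n ζ) with hQ
  have hantisymm : ∀ a b, P a * Q b - P b * Q a = C (ζ a b) * halfForm n ζ := fun a b => by
    simp only [hP, hQ, pderiv_inr_halfForm, pderiv_inl_halfForm, Finset.sum_mul_sum]
    simp only [halfForm, Finset.mul_sum, ← Finset.sum_sub_distrib]
    rw [Finset.sum_comm]
    refine Finset.sum_congr rfl fun d _ => Finset.sum_congr rfl fun c _ => ?_
    have h := congrArg (C (σ := Fin n ⊕ Fin n)) (hplucker a b c d)
    simp only [C_sub, C_mul] at h
    rw [hneg b d, hneg a d, hneg c d, C_neg, C_neg, C_neg]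
    linear_combination (-X (Sum.inl c) * X (Sum.inr d)) * h
  have hswap : ∑ a, ∑ b, C (star (ζ a b)) * (P b * Q a) =
      -∑ a, ∑ b, C (star (ζ a b)) * (P a * Q b) := by
    rw [Finset.sum_comm, ← Finset.sum_neg_distrib]
    refine Finset.sum_congr rfl fun a _ => ?_
    rw [← Finset.sum_neg_distrib]
    refine Finset.sum_congr rfl fun b _ => ?_
    rw [hneg a b, star_neg, C_neg]
    ring
  have hsum : ∑ a, ∑ b, C (star (ζ a b)) * (P a * Q b - P b * Q a) =
      C (ζᴴ * ζ).trace * halfForm n ζ := by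
    simp only [hantisymm, trace_conjTranspose_mul_self_eq_sum, map_sum, Finset.sum_mul, C_mul,
      mul_assoc]
  simp only [mul_sub, Finset.sum_sub_distrib] at hsum
  rw [hswap] at hsum
  have htwo : C (ζᴴ * ζ).trace = 2 * C (σ := Fin n ⊕ Fin n) ((ζᴴ * ζ).trace / 2) := by
    rw [← map_ofNat (C (R := ℂ) (σ := Fin n ⊕ Fin n)) 2, ← C_mul, mul_div_cancel₀ _ two_ne_zero]
  rw [htwo] at hsum
  refine mul_left_cancel₀ (two_ne_zero (α := MvPolynomial (Fin n ⊕ Fin n) ℂ)) ?_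
  linear_combination hsum

/-- The lowering operator acts on powers of the form by a scalar. -/
theorem half_smul_Fzeta_halfForm_pow (hneg : ∀ a b, ζ b a = -ζ a b)
    (hplucker : ∀ a b c d, ζ a c * ζ b d - ζ a d * ζ b c = ζ a b * ζ c d) (J : ℕ) :
    (2⁻¹ : ℂ) • Fzeta n ζ (halfForm n ζ ^ (J + 1)) =
      (((J : ℂ) + 1) * ((J : ℂ) + 2) * ((ζᴴ * ζ).trace / 2)) • halfForm n ζ ^ J := by
  rw [half_smul_Fzeta hneg]
  have hderiv : ∀ a b, pderiv (Sum.inr a) (pderiv (Sum.inl b) (halfForm n ζ ^ (J + 1))) =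
      ((J : MvPolynomial (Fin n ⊕ Fin n) ℂ) + 1) *
        ((J : MvPolynomial (Fin n ⊕ Fin n) ℂ) * halfForm n ζ ^ (J - 1) *
        (pderiv (Sum.inr a) (halfForm n ζ) * pderiv (Sum.inl b) (halfForm n ζ)) +
        halfForm n ζ ^ J * C (ζ a b)) := fun a b => by
    rw [← pderiv_inr_pderiv_inl_halfForm a b]
    simp only [pderiv_pow, pderiv_mul, Nat.add_sub_cancel, Nat.cast_add, Nat.cast_one, map_add,
      pderiv_one, Derivation.map_natCast]
    ring
  have hsplit : ∑ a, ∑ b, C (star (ζ a b)) *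
        pderiv (Sum.inr a) (pderiv (Sum.inl b) (halfForm n ζ ^ (J + 1))) =
      ((J : MvPolynomial (Fin n ⊕ Fin n) ℂ) + 1) *
        ((J : MvPolynomial (Fin n ⊕ Fin n) ℂ) * halfForm n ζ ^ (J - 1) *
        (∑ a, ∑ b, C (star (ζ a b)) *
          (pderiv (Sum.inr a) (halfForm n ζ) * pderiv (Sum.inl b) (halfForm n ζ))) +
        halfForm n ζ ^ J * ∑ a, ∑ b, C (star (ζ a b)) * C (ζ a b)) := by
    simp only [hderiv, Finset.mul_sum, ← Finset.sum_add_distrib]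
    refine Finset.sum_congr rfl fun a _ => Finset.sum_congr rfl fun b _ => ?_
    ring
  have htrace : ∑ a, ∑ b, C (star (ζ a b)) * C (ζ a b) =
      2 * C (σ := Fin n ⊕ Fin n) ((ζᴴ * ζ).trace / 2) := by
    rw [← map_ofNat (C (R := ℂ) (σ := Fin n ⊕ Fin n)) 2, ← C_mul, mul_div_cancel₀ _ two_ne_zero,
      trace_conjTranspose_mul_self_eq_sum]
    simp only [map_sum, C_mul]
  have hpow : (J : MvPolynomial (Fin n ⊕ Fin n) ℂ) * halfForm n ζ ^ (J - 1) * halfForm n ζ =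
      J * halfForm n ζ ^ J := by
    cases J with
    | zero => simp
    | succ k => rw [Nat.add_sub_cancel, pow_succ, mul_assoc]
  rw [hsplit, sum_pderiv_halfForm_mul hneg hplucker, htrace, smul_eq_C_mul]
  simp only [C_mul, C_add, C_1, map_ofNat, map_natCast]
  linear_combination ((J : MvPolynomial (Fin n ⊕ Fin n) ℂ) + 1) *
    C ((ζᴴ * ζ).trace / 2) * hpow

theorem Fzeta_smul (c : ℂ) (p : MvPolynomial (Fin n ⊕ Fin n) ℂ) :
    Fzeta n ζ (c • p) = c • Fzeta n ζ p := by
  simp only [Fzeta, Derivation.map_smul, Finset.smul_sum, ← smul_sub, smul_comm c]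

end

/-- For an anti-symmetric `ζ` of rank 2,
`(½F_ζ)(½F̃_ζ)^J(1) = J(J+1)(½ tr(ζ*ζ)) (½F̃_ζ)^{J-1}(1)` for `J ≥ 1`, and hence
`(½F_ζ)^J(½F̃_ζ)^J(1) = J!(J+1)!(½ tr(ζ*ζ))^J`. -/
theorem coherent_intertwiner_norm
    {n : ℕ} (hn : 2 ≤ n) (ζ : Matrix (Fin n) (Fin n) ℂ)
    (hanti : ζᵀ = -ζ) (hrank : ζ.rank = 2) :
    (∀ J : ℕ, 1 ≤ J →
      (2⁻¹ : ℂ) • Fzeta n ζ (((2⁻¹ : ℂ) • fzeta n ζ) ^ J) =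
        ((J : ℂ) * ((J : ℂ) + 1) * ((ζᴴ * ζ).trace / 2)) •
          ((2⁻¹ : ℂ) • fzeta n ζ) ^ (J - 1)) ∧
    (∀ J : ℕ,
      (fun p => (2⁻¹ : ℂ) • Fzeta n ζ p)^[J] (((2⁻¹ : ℂ) • fzeta n ζ) ^ J) =
        C ((J.factorial : ℂ) * ((J + 1).factorial : ℂ) * ((ζᴴ * ζ).trace / 2) ^ J)) := by
  have hneg : ∀ a b, ζ b a = -ζ a b := fun a b => congrFun (congrFun hanti a) b
  have hlower := half_smul_Fzeta_halfForm_pow hneg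
    (plucker_of_rank_lt_four ζ hanti (by omega))
  rw [half_smul_fzeta hneg]
  refine ⟨fun J hJ => ?_, fun J => ?_⟩
  · obtain ⟨k, rfl⟩ := Nat.exists_eq_add_of_le' hJ
    rw [hlower, Nat.add_sub_cancel]
    push_cast
    ring_nf
  · induction J with
    | zero => simp
    | succ k ih =>
      have hcomm (c : ℂ) := Function.Commute.iterate_left (n := k)
        (f := fun p => (2⁻¹ : ℂ) • Fzeta n ζ p) (g := fun p => c • p)
        fun p => by simp only [Fzeta_smul, smul_comm c]
      rw [Function.iterate_succ_apply, hlower, hcomm _ (halfForm n ζ ^ k), ih]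
      beta_reduce
      rw [smul_eq_C_mul, ← C_mul, Nat.factorial_succ (k + 1), Nat.factorial_succ k]
      push_cast
      ring_nf
end
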